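/- Let ℓ ∈ ℕ and σ < 1/2 be fixed reals with ℓ ≥ 1. Then ∫_0^T |ζ^{(ℓ)}(σ + it)|² dt ∼ (2π)^{2σ−1} · (ζ(2−2σ)/(2−2σ)) · T^{2−2σ} · (log(T/2π))^{2ℓ} as T → ∞. Consequently, for any fixed β ∈ [0,1) and large T, max_{T^β ≤ t ≤ T} |ζ^{(ℓ)}(σ+it)| ≥ (1+o(1)) (2π)^{σ−1/2} √(ζ(2−2σ)/(2−2σ)) · T^{1/2−σ} (log T)^ℓ. -/

import Mathlib

open Filter

namespace ZL
open Complex Set MeasureTheory Topology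

/-- the fractional part cut off below `N` -/
noncomputable def fr (N : ℕ) : ℝ → ℂ := indicator (Ioi (N : ℝ)) (fun u => ((Int.fract u : ℝ) : ℂ))

lemma fr_norm_le (N : ℕ) (u : ℝ) : ‖fr N u‖ ≤ 1 := by
  unfold fr
  by_cases h : u ∈ Ioi (N : ℝ)
  · rw [indicator_of_mem h, Complex.norm_real, Real.norm_of_nonneg (Int.fract_nonneg u)]
    exact (Int.fract_lt_one u).le
  · rw [indicator_of_notMem h]; simp

lemma fr_meas (N : ℕ) : Measurable (fr N) := by
  unfold fr
  exact (Complex.measurable_ofReal.comp measurable_fract).indicator measurableSet_Ioi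

lemma fr_locInt (N : ℕ) : LocallyIntegrableOn (fr N) (Ioi 0) := by
  have : LocallyIntegrable (fun _ : ℝ => (1 : ℝ)) := locallyIntegrable_const 1
  refine (this.mono (fr_meas N).aestronglyMeasurable ?_).locallyIntegrableOn _
  filter_upwards with u
  simpa using fr_norm_le N u

lemma fr_top (N : ℕ) : (fr N) =O[atTop] (fun x : ℝ => x ^ (-(0 : ℝ))) := by
  refine Asymptotics.IsBigO.of_bound 1 ?_
  filter_upwards with u
  simpa using fr_norm_le N u

lemma fr_bot {N : ℕ} (hN : 1 ≤ N) (b : ℝ) : (fr N) =O[𝓝[>] 0] (fun x : ℝ => x ^ (-b)) := by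
  refine Asymptotics.IsBigO.of_bound 1 ?_
  have : ∀ᶠ u : ℝ in 𝓝[>] 0, u < 1 := by
    apply eventually_nhdsWithin_of_eventually_nhds
    exact gt_mem_nhds one_pos
  filter_upwards [this] with u hu
  have : u ∉ Ioi (N : ℝ) := by
    simp only [mem_Ioi, not_lt]
    have : (1 : ℝ) ≤ N := by exact_mod_cast hN
    linarith
  unfold fr
  rw [indicator_of_notMem this]; simp

lemma fr_mellin_diff {N : ℕ} (hN : 1 ≤ N) {s : ℂ} (hs : s.re < 0) :
    DifferentiableAt ℂ (mellin (fr N)) s :=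
  mellin_differentiableAt_of_isBigO_rpow (a := 0) (b := s.re - 1) (fr_locInt N) (fr_top N) hs
    (fr_bot hN _) (by linarith)

lemma fr_mellin_conv {N : ℕ} (hN : 1 ≤ N) {s : ℂ} (hs : s.re < 0) :
    MellinConvergent (fr N) s :=
  mellinConvergent_of_isBigO_rpow (a := 0) (b := s.re - 1) (fr_locInt N) (fr_top N) hs
    (fr_bot hN _) (by linarith)

lemma fr_mellin_eq (N : ℕ) (s : ℂ) :
    mellin (fr N) s = ∫ u in Ioi (N : ℝ), (u : ℂ) ^ (s - 1) * ((Int.fract u : ℝ) : ℂ) := by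
  unfold mellin fr
  have h1 : ∀ u : ℝ, (u : ℂ) ^ (s - 1) • indicator (Ioi (N : ℝ)) (fun u => ((Int.fract u : ℝ) : ℂ)) u
      = indicator (Ioi (N : ℝ)) (fun u : ℝ => (u : ℂ) ^ (s - 1) * ((Int.fract u : ℝ) : ℂ)) u := by
    intro u
    by_cases h : u ∈ Ioi (N : ℝ)
    · simp [indicator_of_mem h]
    · simp [indicator_of_notMem h]
  simp_rw [h1]
  rw [setIntegral_indicator measurableSet_Ioi]
  congr 2
  ext u
  simp only [mem_inter_iff, mem_Ioi, and_iff_right_iff_imp]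
  intro hu
  exact lt_of_le_of_lt (Nat.cast_nonneg N) hu

lemma fr_step {N : ℕ} (hN : 1 ≤ N) {s : ℂ} (hs : 1 < s.re) :
    s * mellin (fr N) (-s) - s * mellin (fr (N + 1)) (-s) =
      s * (((N : ℂ) + 1) ^ (1 - s) - (N : ℂ) ^ (1 - s)) / (1 - s)
        + N * ((N : ℂ) + 1) ^ (-s) - (N : ℂ) ^ (1 - s) := by
  have hs0 : s ≠ 0 := by rintro rfl; simp at hs; linarith
  have hs1 : 1 - s ≠ 0 := by
    intro h; have : s = 1 := by linear_combination -h
    rw [this] at hs; simp at hs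
  have hNpos : (0 : ℝ) < N := by exact_mod_cast hN
  have hN0 : (N : ℂ) ≠ 0 := by exact_mod_cast hNpos.ne'
  have hinteg : IntegrableOn (fun u : ℝ => (u : ℂ) ^ (-s - 1) * ((Int.fract u : ℝ) : ℂ)) (Ioi (N : ℝ)) := by
    have := fr_mellin_conv hN (s := -s) (by simp; linarith)
    unfold MellinConvergent at this
    refine (this.mono_set (Ioi_subset_Ioi hNpos.le)).congr_fun ?_ measurableSet_Ioi
    intro u hu
    simp [fr, indicator_of_mem hu]
  have hsub : (Ioi (N : ℝ)) = Ioc (N : ℝ) ((N + 1 : ℕ) : ℝ) ∪ Ioi ((N + 1 : ℕ) : ℝ) := by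
    rw [Ioc_union_Ioi_eq_Ioi]; push_cast; linarith
  have e1 : mellin (fr N) (-s) - mellin (fr (N + 1)) (-s) =
      ∫ u in (N : ℝ)..((N + 1 : ℕ) : ℝ), ((u : ℂ) ^ (-s) - N * (u : ℂ) ^ (-s - 1)) := by
    rw [fr_mellin_eq, fr_mellin_eq, hsub, setIntegral_union (Ioc_disjoint_Ioi le_rfl) measurableSet_Ioi
      (hinteg.mono_set (by rw [hsub]; exact subset_union_left))
      (hinteg.mono_set (by rw [hsub]; exact subset_union_right)), add_sub_cancel_right,
      intervalIntegral.integral_of_le (by push_cast; linarith), integral_Ioc_eq_integral_Ioo,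
      integral_Ioc_eq_integral_Ioo]
    refine setIntegral_congr_fun measurableSet_Ioo ?_
    intro u hu
    have hfl : ⌊u⌋ = (N : ℤ) := by
      rw [Int.floor_eq_iff]; refine ⟨by exact_mod_cast hu.1.le, ?_⟩
      have := hu.2; push_cast at this ⊢; exact this
    have hu0 : (u : ℂ) ≠ 0 := by exact_mod_cast (hNpos.trans hu.1).ne'
    have : Int.fract u = u - N := by rw [Int.fract, hfl]; simp
    simp only [this]
    have : (u : ℂ) ^ (-s) = (u : ℂ) ^ (-s - 1) * u := by
      rw [cpow_sub _ _ hu0, cpow_one]; field_simp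
    rw [this]; push_cast; ring
  have hnot : (0 : ℝ) ∉ uIcc (N : ℝ) ((N + 1 : ℕ) : ℝ) := by
    rw [uIcc_of_le (by push_cast; linarith)]
    simp only [mem_Icc, not_and_or, not_le]; left; exact hNpos
  have hii : ∀ r : ℂ, IntervalIntegrable (fun u : ℝ => (u : ℂ) ^ r) volume (N : ℝ) ((N + 1 : ℕ) : ℝ) := by
    intro r
    apply intervalIntegral.intervalIntegrable_cpow
    right; exact hnot
  rw [← mul_sub, e1, intervalIntegral.integral_sub (hii _) ((hii _).const_mul _),
    intervalIntegral.integral_const_mul, integral_cpow, integral_cpow]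
  · have : (N : ℂ) ^ (1 - s) = N * (N : ℂ) ^ (-s) := by
      rw [sub_eq_add_neg, cpow_add _ _ hN0, cpow_one]
    rw [show -s + 1 = 1 - s by ring, show -s - 1 + 1 = -s by ring]
    push_cast
    field_simp
    rw [this]; ring
  · right; refine ⟨?_, hnot⟩
    intro h; apply hs0; linear_combination -h
  · right; refine ⟨?_, hnot⟩
    intro h; apply hs1; linear_combination h

lemma fr_mellin_bound {N : ℕ} (hN : 1 ≤ N) {s : ℂ} (hs : 0 < s.re) :
    ‖mellin (fr N) (-s)‖ ≤ (N : ℝ) ^ (-s.re) / s.re := by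
  have hNpos : (0 : ℝ) < N := by exact_mod_cast hN
  rw [fr_mellin_eq]
  have h1 : ∀ u ∈ Ioi (N : ℝ), ‖(u : ℂ) ^ (-s - 1) * ((Int.fract u : ℝ) : ℂ)‖ ≤ u ^ (-s.re - 1) := by
    intro u hu
    rw [norm_mul, norm_cpow_eq_rpow_re_of_pos (hNpos.trans hu), Complex.norm_real,
      Real.norm_of_nonneg (Int.fract_nonneg u)]
    have h2 : 0 ≤ u ^ ((-s - 1).re) := Real.rpow_nonneg (hNpos.trans hu).le _
    calc _ ≤ u ^ ((-s - 1).re) * 1 := by gcongr; exact (Int.fract_lt_one u).le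
      _ = _ := by simp
  refine (norm_integral_le_of_norm_le (integrableOn_Ioi_rpow_of_lt (by linarith) hNpos)
    ((ae_restrict_iff' measurableSet_Ioi).2 (ae_of_all _ h1))).trans ?_
  rw [integral_Ioi_rpow_of_lt (by linarith) hNpos]
  apply le_of_eq
  rw [sub_add_cancel]; field_simp

lemma zeta_formula_gt {N : ℕ} (hN : 1 ≤ N) {s : ℂ} (hs : 1 < s.re) :
    riemannZeta s = ∑ n ∈ Finset.range N, 1 / ((n : ℂ) + 1) ^ s
      + (N : ℂ) ^ (1 - s) / (s - 1) - s * mellin (fr N) (-s) := by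
  set G : ℕ → ℂ := fun N => ∑ n ∈ Finset.range N, 1 / ((n : ℂ) + 1) ^ s
      + (N : ℂ) ^ (1 - s) / (s - 1) - s * mellin (fr N) (-s) with hG
  have hs1 : s - 1 ≠ 0 := by
    intro h; have : s = 1 := by linear_combination h
    rw [this] at hs; simp at hs
  have hs1' : 1 - s ≠ 0 := by
    intro h; apply hs1; linear_combination -h
  have hstep : ∀ n, 1 ≤ n → G (n + 1) = G n := by
    intro n hn
    have := fr_step hn hs
    have hn0 : (n : ℂ) + 1 ≠ 0 := by exact_mod_cast Nat.succ_ne_zero n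
    have h2 : ((n : ℂ) + 1) ^ (1 - s) = (n + 1) * ((n : ℂ) + 1) ^ (-s) := by
      rw [sub_eq_add_neg, cpow_add _ _ hn0, cpow_one]
    have h3 : 1 / ((n : ℂ) + 1) ^ s = ((n : ℂ) + 1) ^ (-s) := by rw [cpow_neg, one_div]
    simp only [hG, Finset.sum_range_succ]
    push_cast
    have e : s * mellin (fr (n + 1)) (-s) = s * mellin (fr n) (-s) - (s * (((n : ℂ) + 1) ^ (1 - s) - (n : ℂ) ^ (1 - s)) / (1 - s)
        + n * ((n : ℂ) + 1) ^ (-s) - (n : ℂ) ^ (1 - s)) := by rw [← this]; ring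
    rw [e, h3, h2, show (1 - s) = -(s - 1) by ring]
    field_simp
    ring
  have hconst : ∀ n, 1 ≤ n → G n = G N := by
    have : ∀ n, 1 ≤ n → G n = G 1 := by
      intro n hn
      induction n, hn using Nat.le_induction with
      | base => rfl
      | succ k hk ih => rw [hstep k hk, ih]
    intro n hn
    rw [this n hn, this N hN]
  have hlim1 : Tendsto G atTop (𝓝 (G N)) := by
    refine tendsto_const_nhds.congr' ?_
    filter_upwards [eventually_ge_atTop 1] with n hn
    exact (hconst n hn).symm
  have hlim2 : Tendsto G atTop (𝓝 (riemannZeta s + 0 / (s - 1) - s * 0)) := by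
    refine Tendsto.sub (Tendsto.add ?_ ?_) ?_
    · rw [zeta_eq_tsum_one_div_nat_add_one_cpow hs]
      refine HasSum.tendsto_sum_nat (Summable.hasSum ?_)
      have := (summable_nat_add_iff 1).2 (Complex.summable_one_div_nat_cpow.2 hs)
      simpa using this
    · refine Tendsto.div_const ?_ _
      rw [tendsto_zero_iff_norm_tendsto_zero]
      have : Tendsto (fun n : ℕ => (n : ℝ) ^ (-(s.re - 1))) atTop (𝓝 0) :=
        (tendsto_rpow_neg_atTop (by linarith)).comp tendsto_natCast_atTop_atTop
      refine this.congr' ?_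
      filter_upwards [eventually_ge_atTop 1] with n hn
      rw [norm_natCast_cpow_of_pos (by omega)]
      simp
    · refine Tendsto.const_mul _ ?_
      rw [tendsto_zero_iff_norm_tendsto_zero]
      have : Tendsto (fun n : ℕ => (n : ℝ) ^ (-s.re) / s.re) atTop (𝓝 (0 / s.re)) :=
        ((tendsto_rpow_neg_atTop (by linarith)).comp tendsto_natCast_atTop_atTop).div_const _
      rw [zero_div] at this
      refine squeeze_zero' (Eventually.of_forall fun n => norm_nonneg _) ?_ this
      filter_upwards [eventually_ge_atTop 1] with n hn
      exact fr_mellin_bound hn (by linarith)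
  have := tendsto_nhds_unique hlim1 hlim2
  simp only [zero_div, mul_zero, add_zero, sub_zero] at this
  rw [← this]

lemma zeta_formula {N : ℕ} (hN : 1 ≤ N) {s : ℂ} (hs : 0 < s.re) (hs1 : s ≠ 1) :
    riemannZeta s = ∑ n ∈ Finset.range N, 1 / ((n : ℂ) + 1) ^ s
      + (N : ℂ) ^ (1 - s) / (s - 1) - s * mellin (fr N) (-s) := by
  set U : Set ℂ := {s | 0 < s.re} with hU
  have hUo : IsOpen U := isOpen_lt continuous_const continuous_re
  have hUc : IsPreconnected U := (convex_halfSpace_re_gt 0).isPreconnected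
  have hN0 : (N : ℂ) ≠ 0 := by exact_mod_cast (by omega : N ≠ 0)
  set R : ℂ → ℂ := fun s => (s - 1) * (∑ n ∈ Finset.range N, 1 / ((n : ℂ) + 1) ^ s)
      + (N : ℂ) ^ (1 - s) - (s - 1) * (s * mellin (fr N) (-s)) with hR
  have hRd : DifferentiableOn ℂ R U := by
    intro z hz
    have h1 : DifferentiableAt ℂ (fun s => mellin (fr N) (-s)) z := by
      have := fr_mellin_diff hN (s := -z) (by simpa [hU] using hz)
      exact this.comp z differentiableAt_id.neg
    have h2 : ∀ n ∈ Finset.range N, DifferentiableAt ℂ (fun s => 1 / ((n : ℂ) + 1) ^ s) z := by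
      intro n _
      have hn0 : (n : ℂ) + 1 ≠ 0 := by exact_mod_cast Nat.succ_ne_zero n
      refine DifferentiableAt.div (by fun_prop) ?_ ?_
      · exact DifferentiableAt.const_cpow differentiableAt_id (Or.inl hn0)
      · simp [cpow_eq_zero_iff, hn0]
    have h3 : DifferentiableAt ℂ (fun s => ∑ n ∈ Finset.range N, 1 / ((n : ℂ) + 1) ^ s) z :=
      DifferentiableAt.fun_sum h2
    have h4 : DifferentiableAt ℂ (fun s => (N : ℂ) ^ (1 - s)) z :=
      DifferentiableAt.const_cpow (by fun_prop) (Or.inl hN0)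
    refine DifferentiableAt.differentiableWithinAt ?_
    exact (((differentiableAt_id.sub_const 1).mul h3).add h4).sub
      ((differentiableAt_id.sub_const 1).mul (differentiableAt_id.mul h1))
  have key : EqOn riemannZeta₁ R U := by
    refine AnalyticOnNhd.eqOn_of_preconnected_of_eventuallyEq (z₀ := 2) ?_ (hRd.analyticOnNhd hUo) hUc
      (by simp [hU]) ?_
    · exact (differentiable_riemannZeta₁.differentiableOn).analyticOnNhd hUo
    · have : ∀ᶠ z : ℂ in 𝓝 2, 1 < z.re :=
        (isOpen_lt continuous_const continuous_re).mem_nhds (by simp)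
      filter_upwards [this] with z hz
      have hz1 : z ≠ 1 := by rintro rfl; simp at hz
      have hz1' : z - 1 ≠ 0 := sub_ne_zero.2 hz1
      have e := riemannZeta_eq_inv_sub_mul hz1
      have e2 := zeta_formula_gt hN hz
      rw [e] at e2
      have : riemannZeta₁ z = (z - 1) * ((z - 1)⁻¹ * riemannZeta₁ z) := by field_simp
      rw [this, e2]
      simp only [hR]
      field_simp
  have h1 : s - 1 ≠ 0 := sub_ne_zero.2 hs1
  rw [riemannZeta_eq_inv_sub_mul hs1, key hs]
  simp only [hR]
  field_simp

end ZL

open Filter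

namespace ZL
open Complex Set MeasureTheory Topology

/-- Gaussian Fourier kernel -/
noncomputable def gK (b l : ℝ) : ℝ := (Real.pi / b) ^ (1 / 2 : ℝ) * Real.exp (-l ^ 2 / (4 * b))

lemma gK_nonneg {b : ℝ} (hb : 0 < b) (l : ℝ) : 0 ≤ gK b l := by
  unfold gK; have := Real.pi_pos; positivity

lemma gK_neg (b l : ℝ) : gK b (-l) = gK b l := by simp [gK]

lemma gK_cont (b : ℝ) : Continuous (gK b) := by unfold gK; fun_prop

lemma gauss_norm {b : ℝ} (hb : 0 < b) (l : ℝ) :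
    ‖∫ t : ℝ, ((Real.exp (-b * t ^ 2) : ℝ) : ℂ) * cexp (I * l * t)‖ = gK b l := by
  have h := fourierIntegral_gaussian (b := (b : ℂ)) (by simpa using hb) (l : ℂ)
  have h2 : ∀ t : ℝ, ((Real.exp (-b * t ^ 2) : ℝ) : ℂ) * cexp (I * l * t)
      = cexp (I * l * t) * cexp (-(b : ℂ) * (t : ℂ) ^ 2) := by
    intro t; rw [mul_comm]; push_cast; rfl
  simp_rw [h2, h]
  rw [norm_mul, Complex.norm_exp]
  have h3 : ((Real.pi : ℂ) / b) = ((Real.pi / b : ℝ) : ℂ) := by push_cast; rfl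
  rw [h3, norm_cpow_eq_rpow_re_of_pos (div_pos Real.pi_pos hb)]
  unfold gK
  congr 1
  · norm_num
  · congr 1
    have : -(l : ℂ) ^ 2 / (4 * b) = ((-l ^ 2 / (4 * b) : ℝ) : ℂ) := by push_cast; rfl
    rw [this, ofReal_re]

lemma gauss_L2 {α : Type*} [MeasurableSpace α] (μ : Measure α) [SFinite μ] {g : α → ℂ}
    (hg : Integrable g μ) (hg2 : Integrable (fun v => ‖g v‖ ^ 2) μ) {φ : α → ℝ} (hφ : Measurable φ)
    {b S : ℝ} (hb : 0 < b)
    (hK : ∀ᵐ v ∂μ, Integrable (fun w => gK b (φ v - φ w)) μ)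
    (hS : ∀ᵐ v ∂μ, ∫ w, gK b (φ v - φ w) ∂μ ≤ S) :
    ∫ t : ℝ, Real.exp (-b * t ^ 2) * ‖∫ v, g v * cexp (I * t * φ v) ∂μ‖ ^ 2
      ≤ S * ∫ v, ‖g v‖ ^ 2 ∂μ := by
  set A : ℝ → ℂ := fun t => ∫ v, g v * cexp (I * t * φ v) ∂μ with hA
  set W : ℝ → ℂ := fun t => ((Real.exp (-b * t ^ 2) : ℝ) : ℂ) with hW
  set H : α × α → ℂ := fun p => g p.1 * (starRingEnd ℂ) (g p.2) with hH
  have hWi : Integrable W := (integrable_exp_neg_mul_sq hb).ofReal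
  have hgc : Integrable (fun v => (starRingEnd ℂ) (g v)) μ := by
    rw [← integrable_norm_iff (continuous_conj.comp_aestronglyMeasurable hg.aestronglyMeasurable)]
    simpa using hg.norm
  have hHi : Integrable H (μ.prod μ) := hg.mul_prod hgc
  have e1 : ∀ t, ((‖A t‖ ^ 2 : ℝ) : ℂ) = ∫ p, H p * cexp (I * (φ p.1 - φ p.2) * t) ∂(μ.prod μ) := by
    intro t
    have : ((‖A t‖ ^ 2 : ℝ) : ℂ) = A t * (starRingEnd ℂ) (A t) := by
      rw [Complex.mul_conj, Complex.normSq_eq_norm_sq]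
    rw [this]
    simp only [hA]
    rw [← integral_conj, ← integral_prod_mul]
    congr 1; ext p
    simp only [hH, map_mul]
    rw [← exp_conj]
    simp only [map_mul, conj_I, conj_ofReal]
    rw [mul_mul_mul_comm, ← Complex.exp_add]
    congr 2; ring
  have hmeas : Measurable (fun q : ℝ × (α × α) => cexp (I * (φ q.2.1 - φ q.2.2) * q.1)) := by
    fun_prop
  have hnorm1 : ∀ (l t : ℝ), ‖cexp (I * l * t)‖ = 1 := by
    intro l t
    rw [show I * (l : ℂ) * t = ((l * t : ℝ) : ℂ) * I by push_cast; ring, norm_exp_ofReal_mul_I]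
  have hinteg : Integrable (fun q : ℝ × (α × α) => W q.1 * H q.2 * cexp (I * (φ q.2.1 - φ q.2.2) * q.1))
      (volume.prod (μ.prod μ)) := by
    refine (hWi.mul_prod hHi).mul_bdd (c := 1) hmeas.aestronglyMeasurable ?_
    filter_upwards with q
    have := hnorm1 (φ q.2.1 - φ q.2.2) q.1
    push_cast at this
    exact this.le
  have e2 : ((∫ t : ℝ, Real.exp (-b * t ^ 2) * ‖A t‖ ^ 2 : ℝ) : ℂ)
      = ∫ p, H p * (∫ t : ℝ, W t * cexp (I * (φ p.1 - φ p.2) * t)) ∂(μ.prod μ) := by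
    rw [← integral_complex_ofReal]
    have : ∀ t : ℝ, ((Real.exp (-b * t ^ 2) * ‖A t‖ ^ 2 : ℝ) : ℂ)
        = ∫ p, W t * H p * cexp (I * (φ p.1 - φ p.2) * t) ∂(μ.prod μ) := by
      intro t
      rw [ofReal_mul, e1, ← integral_const_mul]
      congr 1; ext p; simp only [hW]; ring
    simp_rw [this]
    rw [integral_integral_swap hinteg]
    congr 1; ext p
    rw [← integral_const_mul]
    congr 1; ext t; ring
  set F1 : α × α → ℝ := fun p => ‖g p.1‖ ^ 2 * gK b (φ p.1 - φ p.2) with hF1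
  have hF1m : AEStronglyMeasurable F1 (μ.prod μ) := by
    refine AEStronglyMeasurable.mul ?_ ?_
    · exact (hg2.aestronglyMeasurable).comp_fst
    · have : Measurable (fun p : α × α => gK b (φ p.1 - φ p.2)) :=
        (gK_cont b).measurable.comp (by fun_prop)
      exact this.aestronglyMeasurable
  have hF1i : Integrable F1 (μ.prod μ) := by
    rw [integrable_prod_iff hF1m]
    refine ⟨hK.mono fun v hv => hv.const_mul (‖g v‖ ^ 2), ?_⟩
    refine (hg2.mul_const S).mono' hF1m.norm.integral_prod_right' ?_
    filter_upwards [hS] with v hSv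
    rw [Real.norm_of_nonneg (integral_nonneg fun w => norm_nonneg _)]
    have : ∀ w, ‖F1 (v, w)‖ = ‖g v‖ ^ 2 * gK b (φ v - φ w) := by
      intro w
      exact Real.norm_of_nonneg (mul_nonneg (sq_nonneg _) (gK_nonneg hb _))
    simp_rw [this]
    rw [integral_const_mul]
    exact mul_le_mul_of_nonneg_left hSv (sq_nonneg _)
  have hF1le : ∫ p, F1 p ∂(μ.prod μ) ≤ S * ∫ v, ‖g v‖ ^ 2 ∂μ := by
    rw [integral_prod _ hF1i, mul_comm, ← integral_mul_const]
    refine integral_mono_ae hF1i.integral_prod_left (hg2.mul_const S) ?_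
    filter_upwards [hS] with v hSv
    simp only [hF1]
    rw [integral_const_mul]
    exact mul_le_mul_of_nonneg_left hSv (sq_nonneg _)
  have hsw : ∀ p : α × α, F1 p.swap = ‖g p.2‖ ^ 2 * gK b (φ p.1 - φ p.2) := by
    intro p
    simp only [hF1, Prod.fst_swap, Prod.snd_swap]
    rw [← gK_neg, neg_sub]
  have h0 : (∫ t : ℝ, Real.exp (-b * t ^ 2) * ‖A t‖ ^ 2) ≤
      ‖((∫ t : ℝ, Real.exp (-b * t ^ 2) * ‖A t‖ ^ 2 : ℝ) : ℂ)‖ := by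
    rw [Complex.norm_real]; exact le_abs_self _
  refine h0.trans ?_
  rw [e2]
  have h1 : ‖∫ p, H p * (∫ t : ℝ, W t * cexp (I * (φ p.1 - φ p.2) * t)) ∂(μ.prod μ)‖
      ≤ ∫ p, (1 / 2) * (F1 p + F1 p.swap) ∂(μ.prod μ) := by
    refine norm_integral_le_of_norm_le ((hF1i.add hF1i.swap).const_mul _) ?_
    filter_upwards with p
    have := gauss_norm hb (φ p.1 - φ p.2)
    push_cast at this
    rw [norm_mul]
    simp only [hW]
    push_cast
    rw [this, hsw]
    simp only [hF1, hH, norm_mul, RCLike.norm_conj]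
    have hk := gK_nonneg hb (φ p.1 - φ p.2)
    nlinarith [mul_nonneg hk (sq_nonneg (‖g p.1‖ - ‖g p.2‖))]
  refine h1.trans ?_
  have hsi : Integrable (fun p => F1 p.swap) (μ.prod μ) := hF1i.swap
  rw [integral_const_mul, integral_add hF1i hsi, integral_prod_swap]
  linarith

/-- version on `[-T,T]` -/
lemma gauss_L2_interval {α : Type*} [MeasurableSpace α] (μ : Measure α) [SFinite μ] {g : α → ℂ}
    (hg : Integrable g μ) (hg2 : Integrable (fun v => ‖g v‖ ^ 2) μ) {φ : α → ℝ} (hφ : Measurable φ)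
    {T S : ℝ} (hT : 0 < T)
    (hK : ∀ᵐ v ∂μ, Integrable (fun w => gK (T ^ 2)⁻¹ (φ v - φ w)) μ)
    (hS : ∀ᵐ v ∂μ, ∫ w, gK (T ^ 2)⁻¹ (φ v - φ w) ∂μ ≤ S) :
    ∫ t in Ioc 1 T, ‖∫ v, g v * cexp (I * t * φ v) ∂μ‖ ^ 2
      ≤ Real.exp 1 * (S * ∫ v, ‖g v‖ ^ 2 ∂μ) := by
  have hb : 0 < (T ^ 2)⁻¹ := by positivity
  have h := gauss_L2 μ hg hg2 hφ hb hK hS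
  set A : ℝ → ℂ := fun t => ∫ v, g v * cexp (I * t * φ v) ∂μ with hA
  have hAc : Continuous A := by
    refine continuous_of_dominated (bound := fun v => ‖g v‖) ?_ ?_ hg.norm ?_
    · intro t
      refine hg.aestronglyMeasurable.mul (Measurable.aestronglyMeasurable ?_)
      fun_prop
    · intro t
      filter_upwards with v
      rw [norm_mul, show I * (t : ℂ) * φ v = ((t * φ v : ℝ) : ℂ) * I by push_cast; ring,
        norm_exp_ofReal_mul_I, mul_one]
    · filter_upwards with v
      fun_prop
  have hAb : ∀ t, ‖A t‖ ≤ ∫ v, ‖g v‖ ∂μ := by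
    intro t
    refine norm_integral_le_of_norm_le hg.norm ?_
    filter_upwards with v
    rw [norm_mul, show I * (t : ℂ) * φ v = ((t * φ v : ℝ) : ℂ) * I by push_cast; ring,
        norm_exp_ofReal_mul_I, mul_one]
  have hi : Integrable (fun t : ℝ => Real.exp (-(T ^ 2)⁻¹ * t ^ 2) * ‖A t‖ ^ 2) := by
    refine (integrable_exp_neg_mul_sq hb).mul_bdd (c := (∫ v, ‖g v‖ ∂μ) ^ 2) (by fun_prop) ?_
    filter_upwards with t
    rw [norm_pow, norm_norm]
    exact pow_le_pow_left₀ (norm_nonneg _) (hAb t) 2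
  have h2 : ∫ t in Ioc 1 T, ‖A t‖ ^ 2 ≤
      ∫ t in Ioc 1 T, Real.exp 1 * (Real.exp (-(T ^ 2)⁻¹ * t ^ 2) * ‖A t‖ ^ 2) := by
    refine setIntegral_mono_on ?_ (hi.const_mul _).integrableOn measurableSet_Ioc ?_
    · exact ((hAc.norm.pow 2).integrableOn_Icc).mono_set Ioc_subset_Icc_self
    · intro t ht
      rw [← mul_assoc, ← Real.exp_add]
      have : 1 ≤ Real.exp (1 + -(T ^ 2)⁻¹ * t ^ 2) := by
        apply Real.one_le_exp
        have h3 : t ^ 2 ≤ T ^ 2 := pow_le_pow_left₀ (by linarith [ht.1]) ht.2 2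
        have : (T ^ 2)⁻¹ * t ^ 2 ≤ 1 := by
          rw [inv_mul_le_iff₀ (by positivity)]; linarith
        linarith
      nlinarith [sq_nonneg ‖A t‖]
  refine h2.trans ?_
  rw [integral_const_mul]
  refine mul_le_mul_of_nonneg_left ?_ (Real.exp_pos 1).le
  refine (setIntegral_le_integral hi ?_).trans h
  filter_upwards with t
  simp only [Pi.zero_apply]
  positivity

end ZL

open Filter

namespace ZL
open Complex Set MeasureTheory Topology

lemma gK_integral {b : ℝ} (hb : 0 < b) (v : ℝ) :
    Integrable (fun w => gK b (-v - -w)) ∧ ∫ w, gK b (-v - -w) = 2 * Real.pi := by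
  have h1 : ∀ l, gK b l = (Real.pi / b) ^ (1 / 2 : ℝ) * Real.exp (-(4 * b)⁻¹ * l ^ 2) := by
    intro l; unfold gK; congr 2; field_simp
  have hi : Integrable (gK b) := by
    have : gK b = fun l => (Real.pi / b) ^ (1 / 2 : ℝ) * Real.exp (-(4 * b)⁻¹ * l ^ 2) := funext h1
    rw [this]
    exact (integrable_exp_neg_mul_sq (by positivity)).const_mul _
  have e : ∀ w, gK b (-v - -w) = gK b (w - v) := by intro w; congr 1; ring
  simp_rw [e]
  refine ⟨hi.comp_sub_right v, ?_⟩
  rw [integral_sub_right_eq_self (gK b) v]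
  simp_rw [h1]
  rw [integral_const_mul, integral_gaussian, ← Real.sqrt_eq_rpow, ← Real.sqrt_mul (by have := Real.pi_pos; positivity)]
  rw [show Real.pi / b * (Real.pi / (4 * b)⁻¹) = (2 * Real.pi) ^ 2 by field_simp; ring]
  exact Real.sqrt_sq (by have := Real.pi_pos; positivity)

lemma tail_L2 {N : ℕ} (hN : 1 ≤ N) {x T : ℝ} (hx : 0 < x) (hT : 0 < T) :
    ∫ t in Ioc 1 T, ‖mellin (fr N) (-((x : ℂ) - t * I))‖ ^ 2
      ≤ Real.exp 1 * (2 * Real.pi * ((N : ℝ) ^ (-2 * x) / (2 * x))) := by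
  have hNpos : (0 : ℝ) < N := by exact_mod_cast hN
  set g : ℝ → ℂ := fun u => ((Real.exp (x * u) : ℝ) : ℂ) * fr N (Real.exp (-u)) with hg
  have hA : ∀ t : ℝ, mellin (fr N) (-((x : ℂ) - t * I)) = ∫ v, g v * cexp (I * t * (((fun v : ℝ => -v) v : ℝ) : ℂ)) := by
    intro t
    rw [mellin_eq_fourier, Real.fourier_eq']
    congr 1; ext v
    simp only [hg]
    simp only [RCLike.inner_apply, conj_trivial, smul_eq_mul, real_smul]
    rw [mul_comm]
    congr 1
    · simp
    · congr 1
      have : (-((x : ℂ) - t * I)).im = t := by simp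
      rw [this]
      push_cast
      have := Real.pi_pos.ne'
      have h2 : (Real.pi : ℂ) ≠ 0 := by exact_mod_cast this
      field_simp
  have hgb : ∀ u, ‖g u‖ ≤ indicator (Iic (-Real.log N)) (fun u => Real.exp (x * u)) u := by
    intro u
    simp only [hg, norm_mul, Complex.norm_real, Real.norm_of_nonneg (Real.exp_pos _).le]
    by_cases h : u ∈ Iic (-Real.log N)
    · rw [indicator_of_mem h]
      have := fr_norm_le N (Real.exp (-u))
      nlinarith [Real.exp_pos (x * u)]
    · rw [indicator_of_notMem h]
      have : Real.exp (-u) ∉ Ioi (N : ℝ) := by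
        simp only [mem_Iic, not_le] at h
        simp only [mem_Ioi, not_lt]
        rw [← Real.le_log_iff_exp_le hNpos]; linarith
      simp [fr, indicator_of_notMem this]
  have hgm : Measurable g := by
    have := fr_meas N
    simp only [hg]
    fun_prop
  have hgi : Integrable g := by
    refine Integrable.mono' (g := indicator (Iic (-Real.log N)) (fun u => Real.exp (x * u))) ?_
      hgm.aestronglyMeasurable (ae_of_all _ hgb)
    exact (integrableOn_exp_mul_Iic hx _).integrable_indicator measurableSet_Iic
  have hsq : ∀ u, ‖g u‖ ^ 2 ≤ indicator (Iic (-Real.log N)) (fun u => Real.exp ((2 * x) * u)) u := by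
    intro u
    have := pow_le_pow_left₀ (norm_nonneg _) (hgb u) 2
    refine this.trans (le_of_eq ?_)
    by_cases h : u ∈ Iic (-Real.log N)
    · rw [indicator_of_mem h, indicator_of_mem h, ← Real.exp_nat_mul]; congr 1; push_cast; ring
    · rw [indicator_of_notMem h, indicator_of_notMem h]; simp
  have hi2 : Integrable (indicator (Iic (-Real.log N)) (fun u => Real.exp ((2 * x) * u))) :=
    (integrableOn_exp_mul_Iic (by linarith) _).integrable_indicator measurableSet_Iic
  have hgi2 : Integrable (fun u => ‖g u‖ ^ 2) := by
    refine Integrable.mono' hi2 (hgm.norm.pow_const 2).aestronglyMeasurable (ae_of_all _ ?_)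
    intro u
    rw [Real.norm_of_nonneg (sq_nonneg _)]; exact hsq u
  have hb : 0 < (T ^ 2)⁻¹ := by positivity
  have key := gauss_L2_interval volume hgi hgi2 (φ := fun v => -v) measurable_neg hT (S := 2 * Real.pi)
    (ae_of_all _ fun v => (gK_integral hb v).1) (ae_of_all _ fun v => (gK_integral hb v).2.le)
  simp_rw [hA]
  refine key.trans ?_
  have hle : ∫ v, ‖g v‖ ^ 2 ≤ (N : ℝ) ^ (-2 * x) / (2 * x) := by
    refine (integral_mono hgi2 hi2 hsq).trans (le_of_eq ?_)
    rw [integral_indicator measurableSet_Iic, integral_exp_mul_Iic (by linarith)]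
    congr 1
    rw [Real.rpow_def_of_pos hNpos]; congr 1; ring
  have := Real.pi_pos
  gcongr

lemma exp_summ : Summable (fun k : ℤ => Real.exp (-((k : ℝ) ^ 2) / 4)) := by
  have h1 : Summable (fun k : ℤ => 4 * (1 / (k : ℝ) ^ 2)) :=
    (Real.summable_one_div_int_pow.2 (by norm_num)).mul_left 4
  refine Summable.of_norm_bounded_eventually h1 ?_
  have : {k : ℤ | ¬ ‖Real.exp (-((k : ℝ) ^ 2) / 4)‖ ≤ 4 * (1 / (k : ℝ) ^ 2)} ⊆ {0} := by
    intro k hk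
    by_contra hk0
    apply hk
    simp only [mem_singleton_iff] at hk0
    rw [Real.norm_of_nonneg (Real.exp_pos _).le]
    have hkp : (0 : ℝ) < (k : ℝ) ^ 2 := by
      have : (k : ℝ) ≠ 0 := by exact_mod_cast hk0
      positivity
    rw [neg_div, Real.exp_neg, mul_one_div]
    have h2 := Real.add_one_le_exp ((k : ℝ) ^ 2 / 4)
    rw [inv_eq_one_div, div_le_div_iff₀ (Real.exp_pos _) hkp]
    linarith
  exact (Set.finite_singleton 0).subset this

noncomputable def cExp : ℝ := ∑' k : ℤ, Real.exp (-((k : ℝ) ^ 2) / 4)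

lemma log_sep {m n N : ℕ} (hm : m < N) (hn : n < N) {T : ℝ} (hT : (N : ℝ) ≤ T) :
    ((n : ℝ) - m) ^ 2 ≤ T ^ 2 * (Real.log (n + 1) - Real.log (m + 1)) ^ 2 := by
  have key : ∀ a b : ℕ, a ≤ b → b < N → ((b : ℝ) - a) ≤ T * (Real.log (b + 1) - Real.log (a + 1)) := by
    intro a b hab hb
    have ha0 : (0 : ℝ) < a + 1 := by positivity
    have hb0 : (0 : ℝ) < b + 1 := by positivity
    have h1 := Real.one_sub_inv_le_log_of_pos (x := ((b : ℝ) + 1) / (a + 1)) (by positivity)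
    rw [Real.log_div hb0.ne' ha0.ne', inv_div] at h1
    have h2 : 1 - ((a : ℝ) + 1) / (b + 1) = ((b : ℝ) - a) / (b + 1) := by field_simp; ring
    rw [h2, div_le_iff₀ hb0] at h1
    have hbT : (b : ℝ) + 1 ≤ T := by
      have : ((b + 1 : ℕ) : ℝ) ≤ N := by exact_mod_cast hb
      push_cast at this; linarith
    have hab' : (a : ℝ) ≤ b := by exact_mod_cast hab
    have h3 : 0 ≤ Real.log (b + 1) - Real.log (a + 1) :=
      sub_nonneg.2 (Real.log_le_log ha0 (by linarith))
    nlinarith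
  rcases le_total m n with h | h
  · have := key m n h hn
    have h0 : (0 : ℝ) ≤ (n : ℝ) - m := by
      have : (m : ℝ) ≤ n := by exact_mod_cast h
      linarith
    calc _ ≤ (T * (Real.log (n + 1) - Real.log (m + 1))) ^ 2 := pow_le_pow_left₀ h0 this 2
      _ = _ := by ring
  · have := key n m h hm
    have h0 : (0 : ℝ) ≤ (m : ℝ) - n := by
      have : (n : ℝ) ≤ m := by exact_mod_cast h
      linarith
    calc ((n : ℝ) - m) ^ 2 = ((m : ℝ) - n) ^ 2 := by ring
      _ ≤ (T * (Real.log (m + 1) - Real.log (n + 1))) ^ 2 := pow_le_pow_left₀ h0 this 2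
      _ = _ := by ring

lemma poly_L2 {M N : ℕ} {x T : ℝ} (hT0 : 0 < T) (hT : (N : ℝ) ≤ T) :
    ∫ t in Ioc 1 T, ‖∑ n ∈ Finset.Ico M N, 1 / ((n : ℂ) + 1) ^ ((x : ℂ) - t * I)‖ ^ 2
      ≤ Real.exp 1 * ((Real.sqrt Real.pi * T * cExp) *
        ∑ n ∈ Finset.Ico M N, ((n : ℝ) + 1) ^ (-2 * x)) := by
  set s := Finset.Ico M N with hs
  set g : s → ℂ := fun n => ((((n : ℕ) : ℝ) + 1) ^ (-x) : ℝ) with hg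
  set φ : s → ℝ := fun n => Real.log ((n : ℕ) + 1) with hφ
  have hb : 0 < (T ^ 2)⁻¹ := by positivity
  have key := gauss_L2_interval (α := s) Measure.count (g := g) (Integrable.of_finite) (Integrable.of_finite)
    (φ := φ) (measurable_of_finite φ) hT0 (S := Real.sqrt Real.pi * T * cExp)
    (ae_of_all _ fun v => Integrable.of_finite) ?_
  · have e1 : ∀ t : ℝ, ∑ n ∈ s, 1 / ((n : ℂ) + 1) ^ ((x : ℂ) - t * I)
        = ∫ v, g v * cexp (I * t * φ v) ∂Measure.count := by
      intro t
      rw [integral_count, ← Finset.sum_coe_sort s]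
      refine Finset.sum_congr rfl ?_
      intro n _
      simp only [hg, hφ]
      have hn : (0 : ℝ) < ((n : ℕ) : ℝ) + 1 := by positivity
      have hn0 : (((n : ℕ) : ℂ) + 1) ≠ 0 := by exact_mod_cast Nat.succ_ne_zero (n : ℕ)
      rw [one_div, ← cpow_neg, neg_sub, sub_eq_neg_add, cpow_add _ _ hn0, ofReal_cpow hn.le]
      push_cast
      congr 1
      rw [cpow_def_of_ne_zero hn0]
      congr 1
      rw [ofReal_log hn.le]; push_cast; ring
    simp_rw [e1]
    refine key.trans (le_of_eq ?_)
    congr 2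
    rw [integral_count, ← Finset.sum_coe_sort s]
    refine Finset.sum_congr rfl ?_
    intro n _
    have hn : (0 : ℝ) < ((n : ℕ) : ℝ) + 1 := by positivity
    simp only [hg]
    rw [Complex.norm_real, Real.norm_of_nonneg (Real.rpow_nonneg hn.le _), ← Real.rpow_natCast,
      ← Real.rpow_mul hn.le]
    congr 1; push_cast; ring
  · refine ae_of_all _ fun v => ?_
    rw [integral_count]
    have hv := Finset.mem_Ico.1 v.2
    have h1 : ∀ w : s, gK (T ^ 2)⁻¹ (φ v - φ w) ≤ Real.sqrt Real.pi * T *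
        Real.exp (-((((v : ℕ) : ℤ) - ((w : ℕ) : ℤ) : ℤ) : ℝ) ^ 2 / 4) := by
      intro w
      have hw := Finset.mem_Ico.1 w.2
      unfold gK
      have e : (Real.pi / (T ^ 2)⁻¹) ^ (1 / 2 : ℝ) = Real.sqrt Real.pi * T := by
        rw [← Real.sqrt_eq_rpow, div_inv_eq_mul, Real.sqrt_mul Real.pi_pos.le, Real.sqrt_sq hT0.le]
      rw [e]
      refine mul_le_mul_of_nonneg_left ?_ (by positivity)
      apply Real.exp_le_exp.2
      have := log_sep hw.2 hv.2 hT
      have e2 : -(φ v - φ w) ^ 2 / (4 * (T ^ 2)⁻¹) = - (T ^ 2 * (φ v - φ w) ^ 2) / 4 := by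
        field_simp
      rw [e2]
      simp only [hφ]
      push_cast
      linarith
    refine (Finset.sum_le_sum fun w _ => h1 w).trans ?_
    rw [← Finset.mul_sum]
    refine mul_le_mul_of_nonneg_left ?_ (by positivity)
    have hinj : Function.Injective (fun w : s => (((v : ℕ) : ℤ) - ((w : ℕ) : ℤ) : ℤ)) := by
      intro a b hab
      simp only at hab
      apply Subtype.ext; omega
    have h2 := Summable.sum_le_tsum (f := fun k : ℤ => Real.exp (-((k : ℝ) ^ 2) / 4))
      (Finset.univ.map ⟨_, hinj⟩) (fun _ _ => (Real.exp_pos _).le) exp_summ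
    rw [Finset.sum_map] at h2
    exact h2

end ZL

open Filter
namespace ZL
open Complex Set MeasureTheory Topology

noncomputable def DP (M : ℕ) (s : ℂ) : ℂ := ∑ n ∈ Finset.range M, 1 / ((n : ℂ) + 1) ^ s

noncomputable def SM (x0 : ℝ) (M : ℕ) : ℝ := ∑' n : ℕ, ((n : ℝ) + M + 1) ^ (-2 * x0)

lemma summ0 {x0 : ℝ} (h0 : 1 / 2 < x0) : Summable (fun n : ℕ => ((n : ℝ) + 1) ^ (-2 * x0)) := by
  have : Summable (fun n : ℕ => (n : ℝ) ^ (-2 * x0)) := Real.summable_nat_rpow.2 (by linarith)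
  have := (summable_nat_add_iff 1).2 this
  simpa using this

lemma summM {x0 : ℝ} (h0 : 1 / 2 < x0) (M : ℕ) :
    Summable (fun n : ℕ => ((n : ℝ) + M + 1) ^ (-2 * x0)) := by
  have := (summable_nat_add_iff M).2 (summ0 h0)
  simpa using this

lemma SM_nonneg (x0 : ℝ) (M : ℕ) : 0 ≤ SM x0 M := tsum_nonneg fun n => by positivity

lemma SM_tendsto {x0 : ℝ} (h0 : 1 / 2 < x0) : Tendsto (SM x0) atTop (𝓝 0) := by
  have := tendsto_sum_nat_add (fun n : ℕ => ((n : ℝ) + 1) ^ (-2 * x0))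
  refine this.congr fun M => ?_
  unfold SM
  push_cast; rfl

lemma Ico_sum_le {x0 x : ℝ} (h0 : 1 / 2 < x0) (hx : x0 ≤ x) (M N : ℕ) :
    ∑ n ∈ Finset.Ico M N, ((n : ℝ) + 1) ^ (-2 * x) ≤ SM x0 M := by
  rw [Finset.sum_Ico_eq_sum_range]
  have h1 : ∑ k ∈ Finset.range (N - M), (((M + k : ℕ) : ℝ) + 1) ^ (-2 * x)
      ≤ ∑ k ∈ Finset.range (N - M), ((k : ℝ) + M + 1) ^ (-2 * x0) := by
    refine Finset.sum_le_sum fun k _ => ?_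
    have e : (((M + k : ℕ) : ℝ) + 1) = (k : ℝ) + M + 1 := by push_cast; ring
    rw [e]
    refine Real.rpow_le_rpow_of_exponent_le ?_ (by linarith)
    have : (0 : ℝ) ≤ (k : ℝ) + M := by positivity
    linarith
  refine h1.trans ?_
  exact Summable.sum_le_tsum _ (fun k _ => by positivity) (summM h0 M)

lemma line_cont (x : ℝ) : Continuous (fun t : ℝ => (x : ℂ) - t * I) := by fun_prop

lemma zeta_line_cont (x : ℝ) : ContinuousOn (fun t : ℝ => riemannZeta ((x : ℂ) - t * I)) (Ici 1) := by
  intro t ht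
  have h1 : ((x : ℂ) - t * I) ≠ 1 := by
    intro h
    have := congrArg Complex.im h
    simp at this
    rw [this] at ht; simp at ht; linarith
  exact (ContinuousAt.comp (f := fun t : ℝ => (x : ℂ) - t * I) (x := t)
    (differentiableAt_riemannZeta h1).continuousAt (line_cont x).continuousAt).continuousWithinAt

lemma pw_cont (n : ℕ) (x : ℝ) : Continuous (fun t : ℝ => 1 / ((n : ℂ) + 1) ^ ((x : ℂ) - t * I)) := by
  have hn0 : ((n : ℂ) + 1) ≠ 0 := by exact_mod_cast Nat.succ_ne_zero n
  have : Continuous (fun t : ℝ => ((n : ℂ) + 1) ^ ((x : ℂ) - t * I)) :=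
    (line_cont x).const_cpow (Or.inl hn0)
  refine continuous_const.div this fun t => ?_
  simp [cpow_eq_zero_iff, hn0]

lemma DP_cont (M : ℕ) (x : ℝ) : Continuous (fun t : ℝ => DP M ((x : ℂ) - t * I)) := by
  unfold DP
  exact continuous_finsetSum _ fun n _ => pw_cont n x

lemma int_inv_sq {T : ℝ} (hT : 1 ≤ T) : ∫ t in Ioc 1 T, 1 / t ^ 2 ≤ 1 := by
  rw [← intervalIntegral.integral_of_le hT]
  have h : ∫ t in (1:ℝ)..T, 1 / t ^ 2 = ∫ t in (1:ℝ)..T, t ^ (-2 : ℤ) := by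
    congr 1; funext t
    rw [zpow_neg, one_div]; norm_cast
  rw [h, integral_zpow]
  · have : 0 < T := by linarith
    norm_num
    have : 0 ≤ T⁻¹ := by positivity
    have e : (T ^ (-1 : ℤ) - 1) / (-1) = 1 - T⁻¹ := by rw [zpow_neg_one]; ring
    linarith
  · right
    refine ⟨by norm_num, ?_⟩
    rw [uIcc_of_le hT]; simp

lemma norm3 (A B C : ℂ) : ‖A + B - C‖ ^ 2 ≤ 3 * (‖A‖ ^ 2 + ‖B‖ ^ 2 + ‖C‖ ^ 2) := by
  have h1 : ‖A + B - C‖ ≤ ‖A‖ + ‖B‖ + ‖C‖ := (norm_sub_le _ _).trans (by gcongr; exact norm_add_le _ _)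
  have h2 := pow_le_pow_left₀ (norm_nonneg _) h1 2
  nlinarith [sq_nonneg (‖A‖ - ‖B‖), sq_nonneg (‖A‖ - ‖C‖), sq_nonneg (‖B‖ - ‖C‖)]

lemma ms_bound {x0 x1 : ℝ} (h0 : 1 / 2 < x0) :
    ∃ C : ℝ, 0 < C ∧ ∀ x ∈ Icc x0 x1, ∀ M : ℕ, ∀ T : ℝ, (M : ℝ) + 1 ≤ T →
      ∫ t in Ioc 1 T, ‖riemannZeta ((x : ℂ) - t * I) - DP M ((x : ℂ) - t * I)‖ ^ 2
        ≤ C * (T * SM x0 M + T ^ (2 - 2 * x0)) := by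
  have hcE : 0 ≤ cExp := tsum_nonneg fun _ => (Real.exp_pos _).le
  set C1 := Real.exp 1 * (Real.sqrt Real.pi * cExp) with hC1
  set C2 := (2 : ℝ) ^ (2 * x1) with hC2
  set C3 := (|x1| + 1) ^ 2 * (Real.exp 1 * (2 * Real.pi)) * C2 with hC3
  have hC1' : 0 ≤ C1 := by positivity
  have hC2' : 0 < C2 := by positivity
  have hC3' : 0 ≤ C3 := by positivity
  refine ⟨3 * (C1 + C2 + C3), by positivity, ?_⟩
  intro x hx M T hMT
  have hx0 : 0 < x := by linarith [hx.1]
  have hM0 : (0 : ℝ) ≤ M := by positivity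
  have hT1 : 1 ≤ T := by linarith
  have hT0 : 0 < T := by linarith
  set N := ⌊T⌋₊ with hN
  have hNT : (N : ℝ) ≤ T := Nat.floor_le hT0.le
  have hN1 : 1 ≤ N := Nat.le_floor (by exact_mod_cast hT1)
  have hMN : M ≤ N := Nat.le_floor (by linarith)
  have hN0 : (0 : ℝ) < N := by exact_mod_cast hN1
  have hN2 : T / 2 ≤ N := by
    have h1 : T < N + 1 := Nat.lt_floor_add_one T
    have : (1 : ℝ) ≤ N := by exact_mod_cast hN1
    linarith
  -- N^(-2x) bound
  have hNx : (N : ℝ) ^ (-2 * x) ≤ C2 * T ^ (-2 * x0) := by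
    calc (N : ℝ) ^ (-2 * x) ≤ (T / 2) ^ (-2 * x) :=
          Real.rpow_le_rpow_of_nonpos (by positivity) hN2 (by linarith)
      _ = (2 : ℝ) ^ (2 * x) * T ^ (-2 * x) := by
          rw [Real.div_rpow hT0.le (by norm_num), div_eq_mul_inv, ← Real.rpow_neg (by norm_num)]
          rw [mul_comm]; congr 2; ring
      _ ≤ C2 * T ^ (-2 * x0) := by
          refine mul_le_mul ?_ ?_ (by positivity) hC2'.le
          · exact Real.rpow_le_rpow_of_exponent_le (by norm_num) (by linarith [hx.2])
          · exact Real.rpow_le_rpow_of_exponent_le hT1 (by linarith [hx.1])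
  have hTT : T ^ 2 * T ^ (-2 * x0) = T ^ (2 - 2 * x0) := by
    rw [← Real.rpow_natCast, ← Real.rpow_add hT0]; congr 1; push_cast; ring
  set s : ℝ → ℂ := fun t => (x : ℂ) - t * I with hs
  set A : ℝ → ℂ := fun t => ∑ n ∈ Finset.Ico M N, 1 / ((n : ℂ) + 1) ^ (s t) with hA
  set B : ℝ → ℂ := fun t => (N : ℂ) ^ (1 - s t) / (s t - 1) with hB
  set E : ℝ → ℂ := fun t => mellin (fr N) (-(s t)) with hE
  have hsre : ∀ t, (s t).re = x := by intro t; simp [hs]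
  have hsim : ∀ t, (s t).im = -t := by intro t; simp [hs]
  have hs1 : ∀ t ∈ Icc (1:ℝ) T, s t ≠ 1 := by
    intro t ht h
    have := congrArg Complex.im h
    rw [hsim] at this; simp at this; linarith [ht.1]
  have hs0 : ∀ t ∈ Icc (1:ℝ) T, s t ≠ 0 := by
    intro t ht h
    have := congrArg Complex.im h
    rw [hsim] at this; simp at this; linarith [ht.1]
  have form : ∀ t ∈ Icc (1:ℝ) T, riemannZeta (s t) - DP M (s t) = A t + B t - s t * E t := by
    intro t ht
    rw [zeta_formula hN1 (by rw [hsre]; exact hx0) (hs1 t ht)]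
    have : ∑ n ∈ Finset.range N, 1 / ((n : ℂ) + 1) ^ (s t) = DP M (s t) + A t := by
      simp only [hA, DP]
      rw [Finset.sum_range_add_sum_Ico _ hMN]
    rw [this]; ring
  have cs : Continuous s := line_cont x
  have cA : Continuous A := continuous_finsetSum _ fun n _ => pw_cont n x
  have cD : Continuous fun t => DP M (s t) := DP_cont M x
  have cZ : ContinuousOn (fun t => riemannZeta (s t)) (Icc 1 T) :=
    (zeta_line_cont x).mono fun t ht => ht.1
  have cB : ContinuousOn B (Icc 1 T) := by
    refine ContinuousOn.div ?_ (by fun_prop) fun t ht => sub_ne_zero.2 (hs1 t ht)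
    refine Continuous.continuousOn ?_
    have : (N : ℂ) ≠ 0 := by exact_mod_cast hN0.ne'
    exact (continuous_const.sub cs).const_cpow (Or.inl this)
  have cE : ContinuousOn E (Icc 1 T) := by
    have : ContinuousOn (fun t => (A t + B t - (riemannZeta (s t) - DP M (s t))) / s t) (Icc 1 T) :=
      ((cA.continuousOn.add cB).sub (cZ.sub cD.continuousOn)).div cs.continuousOn hs0
    refine this.congr fun t ht => ?_
    simp only
    rw [form t ht]
    field_simp [hs0 t ht]
    ring
  have iOf : ∀ f : ℝ → ℂ, ContinuousOn f (Icc 1 T) → IntegrableOn (fun t => ‖f t‖ ^ 2) (Ioc 1 T) := by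
    intro f hf
    exact ((hf.norm.pow 2).integrableOn_Icc).mono_set Ioc_subset_Icc_self
  have iA := iOf A cA.continuousOn
  have iB := iOf B cB
  have iE := iOf E cE
  have isE := iOf (fun t => s t * E t) (cs.continuousOn.mul cE)
  have bA : ∫ t in Ioc 1 T, ‖A t‖ ^ 2 ≤ C1 * (T * SM x0 M) := by
    refine (poly_L2 hT0 hNT).trans ?_
    have := Ico_sum_le h0 hx.1 M N
    have h2 : Real.exp 1 * ((Real.sqrt Real.pi * T * cExp) *
        ∑ n ∈ Finset.Ico M N, ((n : ℝ) + 1) ^ (-2 * x)) ≤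
        Real.exp 1 * ((Real.sqrt Real.pi * T * cExp) * SM x0 M) := by gcongr
    refine h2.trans (le_of_eq ?_)
    rw [hC1]; ring
  have bB : ∫ t in Ioc 1 T, ‖B t‖ ^ 2 ≤ C2 * T ^ (2 - 2 * x0) := by
    have hi : IntegrableOn (fun t : ℝ => 1 / t ^ 2) (Ioc 1 T) := by
      refine (ContinuousOn.integrableOn_Icc ?_).mono_set Ioc_subset_Icc_self
      refine ContinuousOn.div continuousOn_const (by fun_prop) fun t ht => ?_
      have : 0 < t := by linarith [ht.1]
      positivity
    calc ∫ t in Ioc 1 T, ‖B t‖ ^ 2 ≤ ∫ t in Ioc 1 T, (C2 * T ^ (2 - 2 * x0)) * (1 / t ^ 2) := by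
          refine setIntegral_mono_on iB (hi.const_mul _) measurableSet_Ioc fun t ht => ?_
          have ht0 : 0 < t := by linarith [ht.1]
          simp only [hB]
          rw [norm_div, div_pow, norm_natCast_cpow_of_pos hN1, mul_one_div]
          have e1 : ((N : ℝ) ^ (1 - s t).re) ^ 2 ≤ C2 * T ^ (2 - 2 * x0) := by
            rw [sub_re, hsre, one_re, ← Real.rpow_natCast, ← Real.rpow_mul hN0.le]
            calc (N : ℝ) ^ ((1 - x) * ((2 : ℕ) : ℝ)) = (N : ℝ) ^ 2 * (N : ℝ) ^ (-2 * x) := by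
                  rw [← Real.rpow_natCast (N : ℝ) 2, ← Real.rpow_add hN0]; congr 1; push_cast; ring
              _ ≤ T ^ 2 * (C2 * T ^ (-2 * x0)) := by gcongr
              _ = C2 * T ^ (2 - 2 * x0) := by rw [← hTT]; ring
          have e2 : t ^ 2 ≤ ‖s t - 1‖ ^ 2 := by
            refine pow_le_pow_left₀ ht0.le ?_ 2
            have := abs_im_le_norm (s t - 1)
            rw [sub_im, hsim, one_im, sub_zero, abs_neg, abs_of_pos ht0] at this
            exact this
          gcongr
      _ = (C2 * T ^ (2 - 2 * x0)) * ∫ t in Ioc 1 T, (1 / t ^ 2) := integral_const_mul _ _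
      _ ≤ (C2 * T ^ (2 - 2 * x0)) * 1 := by
          gcongr; exact int_inv_sq hT1
      _ = _ := mul_one _
  have bE : ∫ t in Ioc 1 T, ‖s t * E t‖ ^ 2 ≤ C3 * T ^ (2 - 2 * x0) := by
    calc ∫ t in Ioc 1 T, ‖s t * E t‖ ^ 2
        ≤ ∫ t in Ioc 1 T, ((|x1| + 1) ^ 2 * T ^ 2) * ‖E t‖ ^ 2 := by
          refine setIntegral_mono_on isE (iE.const_mul _) measurableSet_Ioc fun t ht => ?_
          rw [norm_mul, mul_pow]
          gcongr
          rw [← mul_pow]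
          refine pow_le_pow_left₀ (norm_nonneg _) ?_ 2
          have h1 : ‖s t‖ ≤ |x| + |t| := by
            have := norm_le_abs_re_add_abs_im (s t)
            rwa [hsre, hsim, abs_neg] at this
          rw [abs_of_pos hx0, abs_of_pos (by linarith [ht.1])] at h1
          have h2 := le_abs_self x1
          have h3 : 0 ≤ |x1| := abs_nonneg _
          nlinarith [hx.2, ht.2]
      _ = ((|x1| + 1) ^ 2 * T ^ 2) * ∫ t in Ioc 1 T, ‖E t‖ ^ 2 := integral_const_mul _ _
      _ ≤ ((|x1| + 1) ^ 2 * T ^ 2) * (Real.exp 1 * (2 * Real.pi * (C2 * T ^ (-2 * x0)))) := by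
          gcongr
          refine (tail_L2 hN1 hx0 hT0).trans ?_
          gcongr
          refine (div_le_self (by positivity) (by linarith [hx.1])).trans hNx
      _ = C3 * T ^ (2 - 2 * x0) := by rw [← hTT, hC3]; ring
  have hsum : ∫ t in Ioc 1 T, ‖riemannZeta (s t) - DP M (s t)‖ ^ 2
      ≤ ∫ t in Ioc 1 T, 3 * (‖A t‖ ^ 2 + ‖B t‖ ^ 2 + ‖s t * E t‖ ^ 2) := by
    refine setIntegral_mono_on ?_ (((iA.add iB).add isE).const_mul 3) measurableSet_Ioc fun t ht => ?_
    · exact iOf (fun t => riemannZeta (s t) - DP M (s t)) (cZ.sub cD.continuousOn)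
    · rw [form t (Ioc_subset_Icc_self ht)]
      exact norm3 _ _ _
  have heq : ∫ t in Ioc 1 T, 3 * (‖A t‖ ^ 2 + ‖B t‖ ^ 2 + ‖s t * E t‖ ^ 2)
      = 3 * (∫ t in Ioc 1 T, ‖A t‖ ^ 2) + 3 * (∫ t in Ioc 1 T, ‖B t‖ ^ 2)
        + 3 * ∫ t in Ioc 1 T, ‖s t * E t‖ ^ 2 := by
    have q := integral_add (iA.add iB) isE
    simp only [Pi.add_apply] at q
    rw [integral_const_mul, q, integral_add iA iB]; ring
  have hS := SM_nonneg x0 M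
  have q1 : 0 ≤ T * SM x0 M := by positivity
  have q2 : 0 ≤ T ^ (2 - 2 * x0) := by positivity
  rw [heq] at hsum
  refine hsum.trans ?_
  nlinarith [mul_nonneg hC1' q2, mul_nonneg hC2'.le q1, mul_nonneg hC3' q1]

end ZL

open Filter
namespace ZL
open Complex Set MeasureTheory Topology

lemma exp_mean (d : ℝ) : Tendsto (fun T : ℝ => (∫ t in Ioc 1 T, cexp (I * t * d)) / T) atTop
    (𝓝 (if d = 0 then 1 else 0)) := by
  split_ifs with h
  · subst h
    have h1 : Tendsto (fun T : ℝ => (((T - 1) / T : ℝ) : ℂ)) atTop (𝓝 ((1 : ℝ) : ℂ)) := by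
      refine (continuous_ofReal.tendsto _).comp ?_
      have : Tendsto (fun T : ℝ => 1 - T⁻¹) atTop (𝓝 (1 - 0)) :=
        tendsto_const_nhds.sub tendsto_inv_atTop_zero
      rw [sub_zero] at this
      refine this.congr' ?_
      filter_upwards [eventually_gt_atTop 0] with T hT
      field_simp
    rw [ofReal_one] at h1
    refine h1.congr' ?_
    filter_upwards [eventually_ge_atTop 1] with T hT
    rw [← intervalIntegral.integral_of_le hT]
    simp
  · have hc : I * (d : ℂ) ≠ 0 := by simp [h]
    rw [tendsto_zero_iff_norm_tendsto_zero]
    refine squeeze_zero' (g := fun T : ℝ => (2 / |d|) * T⁻¹) (Eventually.of_forall fun _ => norm_nonneg _) ?_ ?_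
    · filter_upwards [eventually_ge_atTop 1] with T hT
      rw [← intervalIntegral.integral_of_le hT]
      have e : ∫ t in (1:ℝ)..T, cexp (I * t * d) = ∫ t in (1:ℝ)..T, cexp ((I * d) * t) := by
        congr 1; funext t; congr 1; ring
      rw [e, integral_exp_mul_complex hc, norm_div, norm_div]
      have hn : ∀ u : ℝ, ‖cexp (I * d * u)‖ = 1 := by
        intro u; rw [norm_exp]; simp
      have h2 : ‖cexp (I * d * T) - cexp (I * d * (1:ℝ))‖ ≤ 2 := by
        refine (norm_sub_le _ _).trans ?_
        rw [hn, hn]; norm_num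
      have h3 : ‖I * (d : ℂ)‖ = |d| := by simp
      have h4 : ‖(T : ℂ)‖ = T := by rw [norm_real, Real.norm_of_nonneg (by linarith)]
      rw [h3, h4, div_eq_mul_inv _ T]
      gcongr
    · simpa using tendsto_inv_atTop_zero.const_mul (2 / |d|)

lemma pw_eq (n : ℕ) (x t : ℝ) : 1 / ((n : ℂ) + 1) ^ ((x : ℂ) - t * I)
    = (((n : ℝ) + 1) ^ (-x) : ℝ) * cexp (I * t * (Real.log (n + 1) : ℝ)) := by
  have hn : (0 : ℝ) < (n : ℝ) + 1 := by positivity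
  have hn0 : ((n : ℂ) + 1) ≠ 0 := by exact_mod_cast Nat.succ_ne_zero n
  rw [one_div, ← cpow_neg, neg_sub, sub_eq_neg_add, cpow_add _ _ hn0, ofReal_cpow hn.le]
  push_cast
  congr 1
  rw [cpow_def_of_ne_zero hn0]
  congr 1
  rw [ofReal_log hn.le]; push_cast; ring

lemma poly_mean (M : ℕ) (x : ℝ) :
    Tendsto (fun T : ℝ => (∫ t in Ioc 1 T, ‖DP M ((x : ℂ) - t * I)‖ ^ 2) / T) atTop
      (𝓝 (∑ n ∈ Finset.range M, ((n : ℝ) + 1) ^ (-2 * x))) := by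
  set c : ℕ → ℝ := fun n => ((n : ℝ) + 1) ^ (-x) with hc
  set l : ℕ → ℝ := fun n => Real.log (n + 1) with hl
  have e1 : ∀ t : ℝ, ((‖DP M ((x : ℂ) - t * I)‖ ^ 2 : ℝ) : ℂ) =
      ∑ n ∈ Finset.range M, ∑ m ∈ Finset.range M, (c n * c m : ℂ) * cexp (I * t * (l n - l m : ℝ)) := by
    intro t
    have : ((‖DP M ((x : ℂ) - t * I)‖ ^ 2 : ℝ) : ℂ) =
      DP M ((x : ℂ) - t * I) * (starRingEnd ℂ) (DP M ((x : ℂ) - t * I)) := by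
      rw [mul_conj, normSq_eq_norm_sq]
    rw [this]
    unfold DP
    rw [map_sum, Finset.sum_mul_sum]
    refine Finset.sum_congr rfl fun n _ => Finset.sum_congr rfl fun m _ => ?_
    rw [pw_eq, pw_eq, map_mul, ← exp_conj]
    simp only [map_mul, conj_I, conj_ofReal]
    rw [mul_mul_mul_comm, ← exp_add]
    simp only [hc, hl]
    congr 2
    push_cast; ring
  have lim : Tendsto (fun T : ℝ => ∑ n ∈ Finset.range M, ∑ m ∈ Finset.range M, (c n * c m : ℂ) *
      ((∫ t in Ioc 1 T, cexp (I * t * (l n - l m : ℝ))) / T)) atTop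
      (𝓝 (∑ n ∈ Finset.range M, ∑ m ∈ Finset.range M, (c n * c m : ℂ) *
        (if l n - l m = 0 then 1 else 0))) :=
    tendsto_finsetSum _ fun n _ => tendsto_finsetSum _ fun m _ => (exp_mean _).const_mul _
  have e2 : ∑ n ∈ Finset.range M, ∑ m ∈ Finset.range M, (c n * c m : ℂ) *
        (if l n - l m = 0 then 1 else 0) = ((∑ n ∈ Finset.range M, ((n : ℝ) + 1) ^ (-2 * x) : ℝ) : ℂ) := by
    rw [ofReal_sum]
    refine Finset.sum_congr rfl fun n hn => ?_
    rw [Finset.sum_eq_single n]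
    · simp only [sub_self, if_true, mul_one, hc]
      rw [← ofReal_mul, ← Real.rpow_add (by positivity)]
      congr 2; ring
    · intro m _ hmn
      rw [if_neg, mul_zero]
      intro h
      have : Real.log ((n : ℝ) + 1) = Real.log ((m : ℝ) + 1) := sub_eq_zero.1 h
      have := Real.log_injOn_pos (by simp; positivity) (by simp; positivity) this
      apply hmn
      have h2 : (m : ℝ) = n := by linarith
      exact_mod_cast h2
    · intro h; exact absurd hn h
  rw [e2] at lim
  have lim2 := (continuous_re.tendsto _).comp lim
  rw [ofReal_re] at lim2
  refine lim2.congr fun T => ?_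
  simp only [Function.comp]
  have e3 : (((∫ t in Ioc 1 T, ‖DP M ((x : ℂ) - t * I)‖ ^ 2) / T : ℝ) : ℂ) = ∑ n ∈ Finset.range M, ∑ m ∈ Finset.range M, (c n * c m : ℂ) *
      ((∫ t in Ioc 1 T, cexp (I * t * (l n - l m : ℝ))) / T) := by
    rw [ofReal_div, ← integral_complex_ofReal]
    simp_rw [e1]
    have hi : ∀ d : ℝ, ∀ k : ℂ, IntegrableOn (fun t : ℝ => k * cexp (I * t * d)) (Ioc 1 T) := by
      intro d k
      have : Continuous (fun t : ℝ => k * cexp (I * t * d)) := by fun_prop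
      exact (this.integrableOn_Icc).mono_set Ioc_subset_Icc_self
    rw [integral_finsetSum _ fun n _ => integrable_finsetSum _ fun m _ => hi _ _, Finset.sum_div]
    refine Finset.sum_congr rfl fun n _ => ?_
    rw [integral_finsetSum _ fun m _ => hi _ _, Finset.sum_div]
    refine Finset.sum_congr rfl fun m _ => ?_
    rw [integral_const_mul, mul_div_assoc]
  rw [← e3, ofReal_re]

/-- Minkowski in square-root form. -/
lemma l2_tri {α : Type*} [MeasurableSpace α] {μ : Measure α} {f g : α → ℂ}
    (hf : MemLp f 2 μ) (hg : MemLp g 2 μ) :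
    Real.sqrt (∫ t, ‖f t‖ ^ 2 ∂μ) ≤ Real.sqrt (∫ t, ‖g t‖ ^ 2 ∂μ) + Real.sqrt (∫ t, ‖f t - g t‖ ^ 2 ∂μ) := by
  have key : ∀ h : α → ℂ, MemLp h 2 μ → (eLpNorm h 2 μ).toReal = Real.sqrt (∫ t, ‖h t‖ ^ 2 ∂μ) := by
    intro h hh
    rw [hh.eLpNorm_eq_integral_rpow_norm (by norm_num) (by norm_num), ENNReal.toReal_ofReal (by positivity),
      Real.sqrt_eq_rpow]
    norm_num
  rw [← key f hf, ← key g hg]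
  have := key (f - g) (hf.sub hg)
  simp only [Pi.sub_apply] at this
  rw [← this, ← ENNReal.toReal_add hg.2.ne (hf.sub hg).2.ne]
  refine ENNReal.toReal_mono (ENNReal.add_ne_top.2 ⟨hg.2.ne, (hf.sub hg).2.ne⟩) ?_
  have e : f = g + (f - g) := by simp
  conv_lhs => rw [e]
  exact eLpNorm_add_le hg.1 (hf.sub hg).1 (by norm_num)

lemma l2_tri' {α : Type*} [MeasurableSpace α] {μ : Measure α} {f g : α → ℂ}
    (hf : MemLp f 2 μ) (hg : MemLp g 2 μ) :
    |Real.sqrt (∫ t, ‖f t‖ ^ 2 ∂μ) - Real.sqrt (∫ t, ‖g t‖ ^ 2 ∂μ)|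
      ≤ Real.sqrt (∫ t, ‖f t - g t‖ ^ 2 ∂μ) := by
  have h1 := l2_tri hf hg
  have h2 := l2_tri hg hf
  have e : ∀ t, ‖g t - f t‖ = ‖f t - g t‖ := fun t => norm_sub_rev _ _
  simp_rw [e] at h2
  rw [abs_le]; constructor <;> linarith

lemma memLp_of_contOn {f : ℝ → ℂ} {a b : ℝ} (hf : ContinuousOn f (Icc a b)) :
    MemLp f 2 (volume.restrict (Ioc a b)) := by
  have h1 : AEStronglyMeasurable f (volume.restrict (Ioc a b)) :=
    (hf.mono Ioc_subset_Icc_self).aestronglyMeasurable measurableSet_Ioc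
  rw [memLp_two_iff_integrable_sq_norm h1]
  exact ((hf.norm.pow 2).integrableOn_Icc).mono_set Ioc_subset_Icc_self

lemma zeta_re_eq {a : ℝ} (ha : 1 / 2 < a) :
    (riemannZeta ((2 * a : ℝ) : ℂ)).re = ∑' n : ℕ, ((n : ℝ) + 1) ^ (-2 * a) := by
  rw [zeta_eq_tsum_one_div_nat_add_one_cpow (by rw [ofReal_re]; linarith)]
  rw [← ofReal_re (∑' n : ℕ, ((n : ℝ) + 1) ^ (-2 * a)), ofReal_tsum]
  congr 1
  refine tsum_congr fun n => ?_
  have hn : (0 : ℝ) < (n : ℝ) + 1 := by positivity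
  rw [ofReal_cpow hn.le, one_div, ← cpow_neg]
  push_cast
  congr 1; ring

lemma zeta_re_pos {a : ℝ} (ha : 1 / 2 < a) : 0 < (riemannZeta ((2 * a : ℝ) : ℂ)).re := by
  rw [zeta_re_eq ha]
  refine (summ0 ha).tsum_pos (fun n => by positivity) 0 ?_
  simp

lemma mean_sq {a : ℝ} (ha : 1 / 2 < a) :
    Tendsto (fun T : ℝ => (∫ t in Ioc 1 T, ‖riemannZeta ((a : ℂ) - t * I)‖ ^ 2) / T) atTop
      (𝓝 (riemannZeta ((2 * a : ℝ) : ℂ)).re) := by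
  obtain ⟨C, hC, hb⟩ := ms_bound (x1 := a) ha
  rw [zeta_re_eq ha]
  set q := ∑' n : ℕ, ((n : ℝ) + 1) ^ (-2 * a) with hq
  have hq0 : 0 ≤ q := tsum_nonneg fun n => by positivity
  set P : ℝ → ℝ := fun T => (∫ t in Ioc 1 T, ‖riemannZeta ((a : ℂ) - t * I)‖ ^ 2) with hP
  have hP0 : ∀ T, 0 ≤ P T := fun T => integral_nonneg fun t => by positivity
  suffices h : Tendsto (fun T => Real.sqrt (P T / T)) atTop (𝓝 (Real.sqrt q)) by
    have := h.pow 2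
    rw [Real.sq_sqrt hq0] at this
    refine this.congr' ?_
    filter_upwards [eventually_gt_atTop 0] with T hT
    rw [Real.sq_sqrt (div_nonneg (hP0 T) hT.le)]
  set qM : ℕ → ℝ := fun M => ∑ n ∈ Finset.range M, ((n : ℝ) + 1) ^ (-2 * a) with hqM
  have hqlim : Tendsto (fun M => Real.sqrt (qM M)) atTop (𝓝 (Real.sqrt q)) :=
    (Real.continuous_sqrt.tendsto _).comp (summ0 ha).hasSum.tendsto_sum_nat
  rw [Metric.tendsto_nhds]
  intro ε hε
  have hSM : Tendsto (fun M => C * SM a M) atTop (𝓝 0) := by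
    simpa using (SM_tendsto ha).const_mul C
  have hδ : 0 < (ε / 3) ^ 2 / 2 := by positivity
  obtain ⟨M, hM1, hM2⟩ := ((Metric.tendsto_nhds.1 hqlim (ε / 3) (by positivity)).and
    (hSM.eventually_lt_const hδ)).exists
  have hTlim : Tendsto (fun T : ℝ => C * T ^ (1 - 2 * a)) atTop (𝓝 0) := by
    have : Tendsto (fun T : ℝ => T ^ (-(2 * a - 1))) atTop (𝓝 0) :=
      tendsto_rpow_neg_atTop (by linarith)
    have := this.const_mul C
    simp only [neg_sub, mul_zero] at this
    exact this
  have hpm : Tendsto (fun T : ℝ => Real.sqrt ((∫ t in Ioc 1 T, ‖DP M ((a : ℂ) - t * I)‖ ^ 2) / T)) atTop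
      (𝓝 (Real.sqrt (qM M))) := (Real.continuous_sqrt.tendsto _).comp (poly_mean M a)
  filter_upwards [hTlim.eventually_lt_const hδ, Metric.tendsto_nhds.1 hpm (ε / 3) (by positivity),
    eventually_ge_atTop ((M : ℝ) + 1)] with T h1 h2 h3
  have hM0 : (0 : ℝ) ≤ M := by positivity
  have hT0 : 0 < T := by linarith
  have hbb := hb a ⟨le_refl _, le_refl _⟩ M T h3
  have cZ : ContinuousOn (fun t : ℝ => riemannZeta ((a : ℂ) - t * I)) (Icc 1 T) :=
    (zeta_line_cont a).mono fun t ht => ht.1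
  have tri := l2_tri' (memLp_of_contOn cZ) (memLp_of_contOn (b := T) (a := 1) (DP_cont M a).continuousOn)
  have hR : (∫ t in Ioc 1 T, ‖riemannZeta ((a : ℂ) - t * I) - DP M ((a : ℂ) - t * I)‖ ^ 2) / T < (ε / 3) ^ 2 := by
    rw [div_lt_iff₀ hT0]
    have e : T ^ (2 - 2 * a) = T ^ (1 - 2 * a) * T := by
      rw [← Real.rpow_add_one hT0.ne']; congr 1; ring
    calc _ ≤ _ := hbb
      _ = (C * SM a M + C * T ^ (1 - 2 * a)) * T := by rw [e]; ring
      _ < _ := by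
        refine mul_lt_mul_of_pos_right ?_ hT0
        linarith
  have hR2 : Real.sqrt ((∫ t in Ioc 1 T, ‖riemannZeta ((a : ℂ) - t * I) - DP M ((a : ℂ) - t * I)‖ ^ 2) / T) < ε / 3 := by
    rw [Real.sqrt_lt' (by positivity)]; exact hR
  have tri2 : |Real.sqrt (P T / T) - Real.sqrt ((∫ t in Ioc 1 T, ‖DP M ((a : ℂ) - t * I)‖ ^ 2) / T)| < ε / 3 := by
    refine lt_of_le_of_lt ?_ hR2
    rw [Real.sqrt_div' _ hT0.le, Real.sqrt_div' _ hT0.le, Real.sqrt_div' _ hT0.le, ← sub_div, abs_div,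
      abs_of_nonneg (Real.sqrt_nonneg T)]
    gcongr
  rw [Real.dist_eq] at h2 hM1 ⊢
  have := abs_lt.1 h2
  have := abs_lt.1 hM1
  have := abs_lt.1 tri2
  rw [abs_lt]; constructor <;> linarith

/-- uniform O(T) bound. -/
lemma ms_unif {x0 x1 : ℝ} (h0 : 1 / 2 < x0) :
    ∃ C : ℝ, 0 < C ∧ ∀ x ∈ Icc x0 x1, ∀ T : ℝ, 1 ≤ T →
      ∫ t in Ioc 1 T, ‖riemannZeta ((x : ℂ) - t * I)‖ ^ 2 ≤ C * T := by
  obtain ⟨C, hC, hb⟩ := ms_bound (x1 := x1) h0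
  refine ⟨C * (SM x0 0 + 1), mul_pos hC (by linarith [SM_nonneg x0 0]), fun x hx T hT => ?_⟩
  have := hb x hx 0 T (by simpa using hT)
  simp only [DP, Finset.range_zero, Finset.sum_empty, sub_zero] at this
  refine this.trans ?_
  have : T ^ (2 - 2 * x0) ≤ T ^ (1 : ℝ) := Real.rpow_le_rpow_of_exponent_le hT (by linarith)
  rw [Real.rpow_one] at this
  nlinarith

end ZL

open Filter
namespace ZL
open Complex Set MeasureTheory Topology

noncomputable def LL (t u : ℝ) : ℝ := (1 / 2) * Real.log (u ^ 2 + t ^ 2)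

lemma LL_deriv {t : ℝ} (ht : 1 ≤ t) (u : ℝ) : HasDerivAt (LL t) (u / (u ^ 2 + t ^ 2)) u := by
  have hp : u ^ 2 + t ^ 2 ≠ 0 := by positivity
  have h1 : HasDerivAt (fun u : ℝ => u ^ 2 + t ^ 2) (2 * u) u := by
    simpa using ((hasDerivAt_id u).pow 2).add_const (t ^ 2)
  have h2 := (h1.log hp).const_mul (1 / 2)
  unfold LL
  refine h2.congr_deriv ?_
  field_simp

lemma LL_step {t u : ℝ} (ht : 1 ≤ t) (hu : 0 ≤ u) :
    |LL t (u + 1) - LL t u - u / (u ^ 2 + t ^ 2)| ≤ 1 / (u ^ 2 + t ^ 2) := by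
  obtain ⟨ξ, hξ, h⟩ := exists_hasDerivAt_eq_slope (LL t) (fun u => u / (u ^ 2 + t ^ 2))
    (show u < u + 1 by linarith) (fun v _ => (LL_deriv ht v).continuousAt.continuousWithinAt)
    (fun v _ => LL_deriv ht v)
  have e : LL t (u + 1) - LL t u = ξ / (ξ ^ 2 + t ^ 2) := by rw [h]; ring
  have p1 : 0 < u ^ 2 + t ^ 2 := by positivity
  have p2 : 0 < ξ ^ 2 + t ^ 2 := by positivity
  have e2 : ξ / (ξ ^ 2 + t ^ 2) - u / (u ^ 2 + t ^ 2)
      = ((ξ - u) * ((t ^ 2 - u * ξ) / (ξ ^ 2 + t ^ 2))) / (u ^ 2 + t ^ 2) := by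
    field_simp; ring
  rw [e, e2, abs_div, abs_of_pos p1]
  gcongr
  rw [abs_mul, abs_div, abs_of_pos p2, abs_of_nonneg (by linarith [hξ.1])]
  have h3 : |t ^ 2 - u * ξ| / (ξ ^ 2 + t ^ 2) ≤ 1 := by
    rw [div_le_one p2, abs_le]
    constructor <;> nlinarith [hξ.1, hξ.2, mul_nonneg hu (hu.trans hξ.1.le), sq_nonneg t]
  have h4 : 0 ≤ |t ^ 2 - u * ξ| / (ξ ^ 2 + t ^ 2) := by positivity
  nlinarith [hξ.1, hξ.2]

lemma tele {t : ℝ} (ht : 1 ≤ t) (n : ℕ) :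
    ∑ k ∈ Finset.range n, 1 / ((k : ℝ) ^ 2 + t ^ 2) ≤ 4 / t := by
  have h : ∀ n : ℕ, ∑ k ∈ Finset.range n, 1 / ((k : ℝ) ^ 2 + t ^ 2) ≤
      2 / (t - 1 / 2) - 2 / (n + t - 1 / 2) := by
    intro n
    induction n with
    | zero => simp
    | succ n ih =>
      rw [Finset.sum_range_succ]
      have hn : (0 : ℝ) ≤ n := by positivity
      have q1 : (0 : ℝ) < n + t - 1 / 2 := by linarith
      have q2 : (0 : ℝ) < n + 1 + t - 1 / 2 := by linarith
      have e : 2 / ((n : ℝ) + t - 1 / 2) - 2 / (n + 1 + t - 1 / 2)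
          = 2 / ((n + t - 1 / 2) * (n + 1 + t - 1 / 2)) := by
        rw [div_sub_div _ _ q1.ne' q2.ne']; congr 1; ring
      have : 1 / ((n : ℝ) ^ 2 + t ^ 2) ≤ 2 / ((n + t - 1 / 2) * (n + 1 + t - 1 / 2)) := by
        rw [div_le_div_iff₀ (by positivity) (by positivity)]
        nlinarith [sq_nonneg ((n : ℝ) - t)]
      push_cast
      linarith
  refine (h n).trans ?_
  have hn : (0 : ℝ) ≤ n := by positivity
  have q1 : (0 : ℝ) ≤ 2 / (n + t - 1 / 2) := div_nonneg (by norm_num) (by linarith)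
  have : 2 / (t - 1 / 2) ≤ 4 / t := by
    rw [div_le_div_iff₀ (by linarith) (by linarith)]; linarith
  linarith

lemma LL_lower {t u : ℝ} (ht : 1 ≤ t) : Real.log t ≤ LL t u := by
  unfold LL
  have h1 : Real.log (t ^ 2) ≤ Real.log (u ^ 2 + t ^ 2) :=
    Real.log_le_log (by positivity) (by nlinarith [sq_nonneg u])
  rw [Real.log_pow] at h1
  push_cast at h1; linarith

lemma LL_upper {t u : ℝ} (ht : 1 ≤ t) : LL t u ≤ Real.log t + u ^ 2 / t := by
  unfold LL
  have ht0 : 0 < t := by linarith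
  have e : u ^ 2 + t ^ 2 = t ^ 2 * (1 + u ^ 2 / t ^ 2) := by field_simp; ring
  rw [e, Real.log_mul (by positivity) (by positivity), Real.log_pow]
  have h1 := Real.log_le_sub_one_of_pos (show 0 < 1 + u ^ 2 / t ^ 2 by positivity)
  have h2 : u ^ 2 / t ^ 2 ≤ u ^ 2 / t := by
    gcongr
    nlinarith
  have h3 : 0 ≤ u ^ 2 / t := by positivity
  push_cast; linarith

noncomputable def phi (n : ℕ) (t x : ℝ) : ℝ :=
  x * Real.log n - ∑ k ∈ Finset.range (n + 1), LL t (x + k)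

lemma phi_bound {x1 t x : ℝ} (ht : 1 ≤ t) (hx : x ∈ Icc (1 / 2) x1) {n : ℕ} (hn : 1 ≤ n) :
    |phi n t x - phi n t (1 / 2) - (x - 1 / 2) * Real.log t|
      ≤ (4 / t + x1 ^ 2 / t + (LL t (x1 + n + 1) - Real.log n)) * (x - 1 / 2) := by
  have hn0 : (1 : ℝ) ≤ n := by exact_mod_cast hn
  have hd : ∀ y : ℝ, HasDerivAt (fun y => phi n t y - y * Real.log t)
      (Real.log n - ∑ k ∈ Finset.range (n + 1), (y + k) / ((y + k) ^ 2 + t ^ 2) - Real.log t) y := by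
    intro y
    have h1 : HasDerivAt (fun y => ∑ k ∈ Finset.range (n + 1), LL t (y + k))
        (∑ k ∈ Finset.range (n + 1), (y + k) / ((y + k) ^ 2 + t ^ 2)) y := by
      refine HasDerivAt.fun_sum fun k _ => ?_
      exact (LL_deriv ht (y + k)).comp_add_const y k
    have h2 := ((hasDerivAt_id y).mul_const (Real.log n)).sub h1
    have h3 := h2.sub ((hasDerivAt_id y).mul_const (Real.log t))
    simp only [one_mul] at h3
    exact h3
  have hbd : ∀ y ∈ Icc (1 / 2) x1, ‖Real.log n - ∑ k ∈ Finset.range (n + 1), (y + k) / ((y + k) ^ 2 + t ^ 2) - Real.log t‖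
      ≤ 4 / t + x1 ^ 2 / t + (LL t (x1 + n + 1) - Real.log n) := by
    intro y hy
    have hy0 : 0 ≤ y := by linarith [hy.1]
    have htel : LL t (y + n + 1) - LL t y = ∑ k ∈ Finset.range (n + 1), (LL t (y + k + 1) - LL t (y + k)) := by
      have := Finset.sum_range_sub (fun k : ℕ => LL t (y + k)) (n + 1)
      push_cast at this
      simp only [add_zero, ← add_assoc] at this
      rw [← this]
    have herr : |∑ k ∈ Finset.range (n + 1), (LL t (y + k + 1) - LL t (y + k)) -
        ∑ k ∈ Finset.range (n + 1), (y + k) / ((y + k) ^ 2 + t ^ 2)| ≤ 4 / t := by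
      rw [← Finset.sum_sub_distrib]
      refine (Finset.abs_sum_le_sum_abs _ _).trans ?_
      refine le_trans (Finset.sum_le_sum fun k _ => ?_) (tele ht (n + 1))
      refine (LL_step ht (by positivity)).trans ?_
      have : (0 : ℝ) ≤ k := by positivity
      gcongr
      linarith
    rw [← htel] at herr
    have b1 := LL_lower (u := y) ht
    have b2 := LL_upper (u := y) ht
    have b3 : y ^ 2 / t ≤ x1 ^ 2 / t := by gcongr; exact hy.2
    have b4 : LL t (y + n + 1) ≤ LL t (x1 + n + 1) := by
      unfold LL
      gcongr
      exact hy.2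
    have b5 : Real.log n ≤ LL t (y + n + 1) := by
      unfold LL
      have : Real.log ((n : ℝ) ^ 2) ≤ Real.log ((y + n + 1) ^ 2 + t ^ 2) := by
        refine Real.log_le_log (by positivity) ?_
        nlinarith [sq_nonneg t]
      rw [Real.log_pow] at this
      push_cast at this; linarith
    have := abs_le.1 herr
    rw [Real.norm_eq_abs, abs_le]
    constructor <;> linarith
  have hmv := (convex_Icc (1 / 2 : ℝ) x1).norm_image_sub_le_of_norm_hasDerivWithin_le
    (fun y _ => (hd y).hasDerivWithinAt) hbd ⟨le_refl _, hx.1.trans hx.2⟩ hx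
  rw [Real.norm_eq_abs, Real.norm_eq_abs, abs_of_nonneg (show 0 ≤ x - 1 / 2 by linarith [hx.1])] at hmv
  refine le_trans (le_of_eq ?_) hmv
  congr 1; ring

lemma log_norm_shift {t : ℝ} (x : ℝ) (k : ℕ) :
    Real.log ‖(x : ℂ) - t * I + k‖ = LL t (x + k) := by
  unfold LL
  have e : ‖(x : ℂ) - t * I + k‖ ^ 2 = (x + k) ^ 2 + t ^ 2 := by
    rw [← normSq_eq_norm_sq, normSq_apply]; simp; ring
  rw [← e, Real.log_pow]; push_cast; ring

lemma log_GammaSeq {x t : ℝ} (ht : 1 ≤ t) {n : ℕ} (hn : 1 ≤ n) :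
    Real.log ‖GammaSeq ((x : ℂ) - t * I) n‖ = Real.log (n.factorial : ℝ) + phi n t x := by
  have hn0 : (0 : ℝ) < n := by exact_mod_cast hn
  have hne : ∀ k ∈ Finset.range (n + 1), ((x : ℂ) - t * I + k) ≠ 0 := by
    intro k _ h
    have := congrArg Complex.im h
    simp at this; linarith
  have hne2 : ∀ k ∈ Finset.range (n + 1), ‖(x : ℂ) - t * I + k‖ ≠ 0 := fun k hk => norm_ne_zero_iff.2 (hne k hk)
  rw [GammaSeq, norm_div, norm_mul, norm_prod, norm_natCast_cpow_of_pos hn, norm_natCast,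
    Real.log_div, Real.log_mul, Real.log_rpow hn0, Real.log_prod hne2]
  · simp_rw [log_norm_shift]
    unfold phi
    simp; ring
  · positivity
  · positivity
  · positivity
  · exact Finset.prod_ne_zero_iff.2 hne2

lemma Gamma_ne {x t : ℝ} (ht : 1 ≤ t) : Complex.Gamma ((x : ℂ) - t * I) ≠ 0 := by
  refine Complex.Gamma_ne_zero fun m h => ?_
  have := congrArg Complex.im h
  simp at this; linarith

lemma LL_lim (t y : ℝ) : Tendsto (fun n : ℕ => LL t (y + n + 1) - Real.log n) atTop (𝓝 0) := by
  have h1 : Tendsto (fun n : ℕ => ((y + 1) * (n : ℝ)⁻¹ + 1) ^ 2 + (t * (n : ℝ)⁻¹) ^ 2) atTop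
      (𝓝 (((y + 1) * 0 + 1) ^ 2 + (t * 0) ^ 2)) := by
    have hi : Tendsto (fun n : ℕ => (n : ℝ)⁻¹) atTop (𝓝 0) := tendsto_inv_atTop_nhds_zero_nat
    exact (((hi.const_mul _).add_const 1).pow 2).add ((hi.const_mul t).pow 2)
  have h2 := (h1.log (by norm_num)).const_mul (1 / 2)
  simp only [mul_zero, zero_add, one_pow] at h2
  norm_num at h2
  refine h2.congr' ?_
  filter_upwards [eventually_ge_atTop 1, (tendsto_natCast_atTop_atTop (R := ℝ)).eventually_gt_atTop (-y)] with n hn hny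
  have hn0 : (0 : ℝ) < n := by exact_mod_cast hn
  have hp : 0 < (y + n + 1) ^ 2 + t ^ 2 := by
    have : 0 < y + n + 1 := by linarith
    positivity
  have e : ((y + 1) * (n : ℝ)⁻¹ + 1) ^ 2 + (t * (n : ℝ)⁻¹) ^ 2 = ((y + n + 1) ^ 2 + t ^ 2) / (n : ℝ) ^ 2 := by
    field_simp; ring
  rw [e, Real.log_div hp.ne' (by positivity), Real.log_pow]
  unfold LL
  push_cast; ring

lemma gamma_ratio {x1 t x : ℝ} (ht : 1 ≤ t) (hx : x ∈ Icc (1 / 2) x1) :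
    |Real.log ‖Complex.Gamma ((x : ℂ) - t * I)‖ - Real.log ‖Complex.Gamma (((1 / 2 : ℝ) : ℂ) - t * I)‖
      - (x - 1 / 2) * Real.log t| ≤ (4 + x1 ^ 2) * x1 / t := by
  have lim : ∀ y : ℝ, Tendsto (fun n : ℕ => Real.log ‖GammaSeq ((y : ℂ) - t * I) n‖) atTop
      (𝓝 (Real.log ‖Complex.Gamma ((y : ℂ) - t * I)‖)) := fun y =>
    ((GammaSeq_tendsto_Gamma _).norm).log (norm_ne_zero_iff.2 (Gamma_ne ht))
  have l1 := (((lim x).sub (lim (1 / 2))).sub_const ((x - 1 / 2) * Real.log t)).abs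
  have l2 : Tendsto (fun n : ℕ => (4 / t + x1 ^ 2 / t + (LL t (x1 + n + 1) - Real.log n)) * (x - 1 / 2)) atTop
      (𝓝 ((4 / t + x1 ^ 2 / t + 0) * (x - 1 / 2))) :=
    ((LL_lim t x1).const_add _).mul_const _
  have := le_of_tendsto_of_tendsto l1 l2 (by
    filter_upwards [eventually_ge_atTop 1] with n hn
    rw [log_GammaSeq ht hn, log_GammaSeq ht hn]
    have := phi_bound ht hx hn
    refine le_trans (le_of_eq ?_) this
    congr 1; ring)
  refine this.trans ?_
  have e : (4 + x1 ^ 2) * x1 / t = (4 / t + x1 ^ 2 / t + 0) * x1 := by ring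
  rw [e]
  have : 0 < t := by linarith
  gcongr
  linarith [hx.2]

lemma gamma_half {t : ℝ} : ‖Complex.Gamma (((1 / 2 : ℝ) : ℂ) - t * I)‖ ^ 2 = Real.pi / Real.cosh (Real.pi * t) := by
  have h := Complex.Gamma_mul_Gamma_one_sub (((1 / 2 : ℝ) : ℂ) - t * I)
  have e1 : (1 : ℂ) - (((1 / 2 : ℝ) : ℂ) - t * I) = (starRingEnd ℂ) (((1 / 2 : ℝ) : ℂ) - t * I) := by
    apply Complex.ext <;> simp
    norm_num
  rw [e1, Complex.Gamma_conj, mul_conj, normSq_eq_norm_sq] at h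
  have e2 : Complex.sin (Real.pi * (((1 / 2 : ℝ) : ℂ) - t * I)) = ((Real.cosh (Real.pi * t) : ℝ) : ℂ) := by
    have : (Real.pi : ℂ) * (((1 / 2 : ℝ) : ℂ) - t * I) = Real.pi / 2 - (Real.pi * t : ℂ) * I := by
      push_cast; ring
    rw [this, Complex.sin_pi_div_two_sub, Complex.cos_mul_I]
    push_cast; rfl
  rw [e2] at h
  exact_mod_cast h

lemma cos_norm (x t : ℝ) : ‖Complex.cos (Real.pi * ((x : ℂ) - t * I) / 2)‖ ^ 2
    = (Real.cosh (Real.pi * t) + Real.cos (Real.pi * x)) / 2 := by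
  have e : (Real.pi * ((x : ℂ) - t * I) / 2) = ((Real.pi * x / 2 : ℝ) : ℂ) + ((-(Real.pi * t / 2) : ℝ) : ℂ) * I := by
    push_cast; ring
  rw [e, Complex.cos_add_mul_I, ← normSq_eq_norm_sq, normSq_apply]
  simp only [sub_re, sub_im, mul_re, mul_im, I_re, I_im, ← ofReal_cos, ← ofReal_sin, ← ofReal_cosh, ← ofReal_sinh, ofReal_re, ofReal_im]
  have h1 : Real.cosh (Real.pi * t) = 1 + 2 * Real.sinh (Real.pi * t / 2) ^ 2 := by
    have := Real.cosh_two_mul (Real.pi * t / 2)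
    rw [show 2 * (Real.pi * t / 2) = Real.pi * t by ring] at this
    rw [this]; have := Real.cosh_sq (Real.pi * t / 2); linarith
  have h2 : Real.cos (Real.pi * x) = 2 * Real.cos (Real.pi * x / 2) ^ 2 - 1 := by
    have := Real.cos_two_mul (Real.pi * x / 2)
    rw [show 2 * (Real.pi * x / 2) = Real.pi * x by ring] at this
    exact this
  have h3 := Real.cosh_sq (Real.pi * t / 2)
  have h4 := Real.sin_sq_add_cos_sq (Real.pi * x / 2)
  rw [h1, h2, Real.cosh_neg, Real.sinh_neg]
  ring_nf
  ring_nf at h3 h4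
  rw [h3]
  have : Real.sin (Real.pi * x * (1 / 2)) ^ 2 = 1 - Real.cos (Real.pi * x * (1/2)) ^ 2 := by linarith
  rw [this]; ring

noncomputable def XX (z : ℂ) : ℂ := 2 * (2 * Real.pi) ^ (-z) * Complex.Gamma z * Complex.cos (Real.pi * z / 2)

lemma XX_norm {x1 t x : ℝ} (ht : 1 ≤ t) (hx : x ∈ Icc (1 / 2) x1) :
    ∃ δ θ : ℝ, |δ| ≤ (4 + x1 ^ 2) * x1 / t ∧ |θ| ≤ 1 / t ∧
      ‖XX ((x : ℂ) - t * I)‖ ^ 2 = (t / (2 * Real.pi)) ^ (2 * x - 1) * Real.exp (2 * δ) * (1 + θ) := by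
  have ht0 : 0 < t := by linarith
  have hpi := Real.pi_pos
  have hch : 0 < Real.cosh (Real.pi * t) := Real.cosh_pos _
  set δ := Real.log ‖Complex.Gamma ((x : ℂ) - t * I)‖ - Real.log ‖Complex.Gamma (((1 / 2 : ℝ) : ℂ) - t * I)‖
      - (x - 1 / 2) * Real.log t with hδ
  refine ⟨δ, Real.cos (Real.pi * x) / Real.cosh (Real.pi * t), gamma_ratio ht hx, ?_, ?_⟩
  · rw [abs_div, abs_of_pos hch]
    have h1 : t ≤ Real.cosh (Real.pi * t) := by
      have h2 := Real.self_le_sinh_iff.2 (show 0 ≤ Real.pi * t by positivity)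
      have h3 := Real.sinh_lt_cosh (Real.pi * t)
      have := Real.pi_gt_three
      nlinarith
    have := Real.abs_cos_le_one (Real.pi * x)
    gcongr
  · have g1 : 0 < ‖Complex.Gamma ((x : ℂ) - t * I)‖ := norm_pos_iff.2 (Gamma_ne ht)
    have g2 : 0 < ‖Complex.Gamma (((1 / 2 : ℝ) : ℂ) - t * I)‖ := norm_pos_iff.2 (Gamma_ne ht)
    have hG : ‖Complex.Gamma ((x : ℂ) - t * I)‖ ^ 2 =
        ‖Complex.Gamma (((1 / 2 : ℝ) : ℂ) - t * I)‖ ^ 2 * t ^ (2 * x - 1) * Real.exp (2 * δ) := by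
      refine Real.log_injOn_pos (mem_Ioi.2 (pow_pos g1 2)) (mem_Ioi.2
        (mul_pos (mul_pos (pow_pos g2 2) (Real.rpow_pos_of_pos ht0 _)) (Real.exp_pos _))) ?_
      rw [Real.log_mul (by positivity) (by positivity), Real.log_mul (by positivity) (by positivity),
        Real.log_exp, Real.log_pow, Real.log_pow, Real.log_rpow ht0, hδ]
      push_cast; ring
    unfold XX
    rw [norm_mul, norm_mul, norm_mul, mul_pow, mul_pow, mul_pow, hG, gamma_half, cos_norm]
    have e1 : ‖((2 * Real.pi : ℂ)) ^ (-((x : ℂ) - t * I))‖ = (2 * Real.pi) ^ (-x) := by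
      have : (2 * Real.pi : ℂ) = ((2 * Real.pi : ℝ) : ℂ) := by push_cast; rfl
      rw [this, norm_cpow_eq_rpow_re_of_pos (by positivity)]
      simp
    rw [e1, Real.div_rpow ht0.le (by positivity)]
    have e2 : ((2 * Real.pi) ^ (-x)) ^ 2 = ((2 * Real.pi) ^ (2 * x - 1))⁻¹ * (2 * Real.pi)⁻¹ := by
      rw [← Real.rpow_natCast, ← Real.rpow_mul (by positivity), ← Real.rpow_neg (by positivity),
        ← Real.rpow_neg_one, ← Real.rpow_add (by positivity)]
      congr 1; push_cast; ring
    rw [e2]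
    have e3 : ‖(2 : ℂ)‖ = 2 := by simp
    rw [e3]
    have : 0 < (2 * Real.pi) ^ (2 * x - 1) := by positivity
    field_simp

end ZL

open Filter
namespace ZL
open Complex Set MeasureTheory Topology

lemma sq_int_le {u : ℝ → ℝ} {m : ℝ} (hm : 0 < m) (hu : Continuous u) :
    (∫ θ in (0:ℝ)..m, u θ) ^ 2 ≤ m * ∫ θ in (0:ℝ)..m, u θ ^ 2 := by
  set A := ∫ θ in (0:ℝ)..m, u θ with hA
  set c := A / m with hc
  have h0 : 0 ≤ ∫ θ in (0:ℝ)..m, (u θ - c) ^ 2 :=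
    intervalIntegral.integral_nonneg hm.le fun _ _ => sq_nonneg _
  have e : ∫ θ in (0:ℝ)..m, (u θ - c) ^ 2 = (∫ θ in (0:ℝ)..m, u θ ^ 2) - 2 * c * A + m * c ^ 2 := by
    have e1 : ∀ θ, (u θ - c) ^ 2 = u θ ^ 2 - (2 * c) * u θ + c ^ 2 := fun θ => by ring
    simp_rw [e1]
    rw [intervalIntegral.integral_add, intervalIntegral.integral_sub, intervalIntegral.integral_const_mul]
    · simp
      exact Or.inl rfl
    all_goals exact Continuous.intervalIntegrable (by fun_prop) _ _
  rw [e] at h0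
  have e2 : A = c * m := by rw [hc]; field_simp
  have e3 : 2 * c * A = 2 * m * c ^ 2 := by rw [e2]; ring
  rw [e3] at h0
  have : A ^ 2 = m * (m * c ^ 2) := by rw [e2]; ring
  rw [this]
  nlinarith

lemma cauchy_sq {f : ℂ → ℂ} {c : ℂ} {R : ℝ} (hR : 0 < R) (n : ℕ)
    (hf : DifferentiableOn ℂ f (Metric.closedBall c R)) :
    ‖iteratedDeriv n f c‖ ^ 2 ≤ (n.factorial / R ^ n) ^ 2 *
      ∫ θ in (0:ℝ)..(2 * Real.pi), ‖f (circleMap c R θ)‖ ^ 2 := by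
  have hpi := Real.pi_pos
  have h := hf.circleIntegral_one_div_sub_center_pow_smul hR n
  have hcont : Continuous fun θ : ℝ => ‖f (circleMap c R θ)‖ := by
    refine (hf.continuousOn.comp_continuous (continuous_circleMap c R) fun θ => ?_).norm
    exact circleMap_mem_closedBall c hR.le θ
  have h1 : ‖(2 * Real.pi * I / n.factorial) • iteratedDeriv n f c‖ ≤
      (1 / R ^ n) * ∫ θ in (0:ℝ)..(2 * Real.pi), ‖f (circleMap c R θ)‖ := by
    rw [← h, circleIntegral]
    refine (intervalIntegral.norm_integral_le_integral_norm (by positivity)).trans (le_of_eq ?_)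
    rw [← intervalIntegral.integral_const_mul]
    congr 1; funext θ
    rw [deriv_circleMap, norm_smul, norm_smul, norm_mul, norm_div, norm_pow]
    simp [abs_of_pos hR]
    field_simp
    ring
  set A := ∫ θ in (0:ℝ)..(2 * Real.pi), ‖f (circleMap c R θ)‖ with hA
  set B := ∫ θ in (0:ℝ)..(2 * Real.pi), ‖f (circleMap c R θ)‖ ^ 2 with hB
  have hB0 : 0 ≤ B := intervalIntegral.integral_nonneg (by positivity) fun _ _ => by positivity
  have hAB : A ^ 2 ≤ (2 * Real.pi) * B := sq_int_le (by positivity) hcont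
  have e : ‖(2 * Real.pi * I / n.factorial) • iteratedDeriv n f c‖ =
      2 * Real.pi / n.factorial * ‖iteratedDeriv n f c‖ := by
    rw [norm_smul, norm_div]; simp [abs_of_pos hpi]
  rw [e] at h1
  have hnf : (0 : ℝ) < n.factorial := by positivity
  have h2 : ‖iteratedDeriv n f c‖ ≤ (n.factorial / R ^ n) * (A / (2 * Real.pi)) := by
    have : ‖iteratedDeriv n f c‖ = (n.factorial / (2 * Real.pi)) * (2 * Real.pi / n.factorial * ‖iteratedDeriv n f c‖) := by
      field_simp
    rw [this]
    calc _ ≤ (n.factorial / (2 * Real.pi)) * (1 / R ^ n * A) := by gcongr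
      _ = _ := by ring
  calc ‖iteratedDeriv n f c‖ ^ 2 ≤ ((n.factorial / R ^ n) * (A / (2 * Real.pi))) ^ 2 := by gcongr
    _ = (n.factorial / R ^ n) ^ 2 * (A ^ 2 / (2 * Real.pi) ^ 2) := by ring
    _ ≤ (n.factorial / R ^ n) ^ 2 * B := by
      gcongr
      rw [div_le_iff₀ (by positivity)]
      have : 1 ≤ 2 * Real.pi := by linarith [Real.pi_gt_three]
      nlinarith [mul_nonneg hB0 hpi.le, mul_nonneg hB0 (sub_nonneg.2 this)]

noncomputable def KK (l : ℕ) (R : ℝ) : ℝ :=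
  ∑ i ∈ Finset.range l, (l.choose i : ℝ) * ((l - i).factorial / R ^ (l - i))

lemma deriv_approx {l : ℕ} (hl : 1 ≤ l) {f : ℂ → ℂ} {z : ℂ} {R L : ℝ} (hR : 0 < R) (hL : 1 ≤ L)
    (hf : DifferentiableOn ℂ f (Metric.closedBall z R)) :
    ‖iteratedDeriv l f z - (L : ℂ) ^ l * f z‖ ^ 2 ≤ (L ^ (l - 1) * KK l R) ^ 2 *
      ∫ θ in (0:ℝ)..(2 * Real.pi),
        ‖cexp (-(L * (circleMap z R θ - z))) * f (circleMap z R θ)‖ ^ 2 := by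
  set H : ℂ → ℂ := fun w => cexp (-(L * (w - z))) * f w with hH
  have hHd : DifferentiableOn ℂ H (Metric.closedBall z R) :=
    DifferentiableOn.mul (by fun_prop) hf
  set E : ℂ → ℂ := fun w => cexp (L * (w - z)) with hE
  have hfE : f = E * H := by
    funext w
    simp only [hE, hH, Pi.mul_apply]
    rw [← mul_assoc, ← exp_add]; simp
  have hEit : ∀ i, iteratedDeriv i E z = (L : ℂ) ^ i := by
    intro i
    have := congrFun (iteratedDeriv_comp_sub_const i (fun s : ℂ => cexp (L * s)) z) z
    simp only [hE]
    rw [this, iteratedDeriv_cexp_const_mul]; simp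
  have hHan : AnalyticAt ℂ H z := hHd.analyticAt (Metric.closedBall_mem_nhds z hR)
  have hEan : ContDiffAt ℂ l E z := by
    have : ContDiff ℂ l E := by simp only [hE]; fun_prop
    exact this.contDiffAt
  have hleib : iteratedDeriv l f z = ∑ i ∈ Finset.range (l + 1),
      (l.choose i : ℂ) * (L : ℂ) ^ i * iteratedDeriv (l - i) H z := by
    conv_lhs => rw [hfE]
    rw [iteratedDeriv_mul hEan hHan.contDiffAt]
    simp_rw [hEit]
  have hHz : H z = f z := by simp [hH]
  set J := ∫ θ in (0:ℝ)..(2 * Real.pi), ‖H (circleMap z R θ)‖ ^ 2 with hJ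
  have hJ0 : 0 ≤ J := intervalIntegral.integral_nonneg (by have := Real.pi_pos; positivity) fun _ _ => by positivity
  have hbd : ∀ n : ℕ, ‖iteratedDeriv n H z‖ ≤ (n.factorial / R ^ n) * Real.sqrt J := by
    intro n
    have h1 := cauchy_sq hR n hHd
    refine le_of_sq_le_sq ?_ (by positivity)
    rw [mul_pow, Real.sq_sqrt hJ0]; exact h1
  have hdiff : ‖iteratedDeriv l f z - (L : ℂ) ^ l * f z‖ ≤ (L ^ (l - 1) * KK l R) * Real.sqrt J := by
    rw [hleib, Finset.sum_range_succ]
    simp only [Nat.choose_self, Nat.cast_one, one_mul, Nat.sub_self, iteratedDeriv_zero, hHz, add_sub_cancel_right]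
    refine (norm_sum_le _ _).trans ?_
    unfold KK
    rw [Finset.mul_sum, Finset.sum_mul]
    refine Finset.sum_le_sum fun i hi => ?_
    have hi' : i ≤ l - 1 := by have := Finset.mem_range.1 hi; omega
    rw [norm_mul, norm_mul, norm_pow, norm_real, Real.norm_of_nonneg (by linarith), norm_natCast]
    calc (l.choose i : ℝ) * L ^ i * ‖iteratedDeriv (l - i) H z‖
        ≤ (l.choose i : ℝ) * L ^ (l - 1) * (((l - i).factorial / R ^ (l - i)) * Real.sqrt J) := by
          gcongr
          · exact hbd _
      _ = _ := by ring
  calc _ ≤ ((L ^ (l - 1) * KK l R) * Real.sqrt J) ^ 2 := by gcongr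
    _ = _ := by rw [mul_pow, Real.sq_sqrt hJ0]

lemma circle_eq (a t R θ : ℝ) : circleMap ((a : ℂ) - t * I) R θ =
    ((a + R * Real.cos θ : ℝ) : ℂ) - ((t - R * Real.sin θ : ℝ) : ℂ) * I := by
  rw [circleMap, exp_mul_I, ← ofReal_cos, ← ofReal_sin]
  push_cast; ring

lemma zeta_fe {x t : ℝ} (ht : 1 ≤ t) : riemannZeta (1 - ((x : ℂ) - t * I)) =
    XX ((x : ℂ) - t * I) * riemannZeta ((x : ℂ) - t * I) := by
  rw [riemannZeta_one_sub]
  · rfl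
  · intro n h
    have := congrArg Complex.im h
    simp at this; linarith
  · intro h
    have := congrArg Complex.im h
    simp at this; linarith

lemma H_bound {a R : ℝ} (hR : 0 < R) (hR1 : R ≤ 1 / 2) (ha : 1 / 2 < a - R) :
    ∃ C : ℝ, 0 < C ∧ ∀ t : ℝ, 2 ≤ t → ∀ θ : ℝ,
      ‖cexp (-((Real.log (t / (2 * Real.pi)) : ℝ) * (circleMap ((a : ℂ) - t * I) R θ - ((a : ℂ) - t * I))))
        * riemannZeta (1 - circleMap ((a : ℂ) - t * I) R θ)‖ ^ 2
      ≤ C * (t / (2 * Real.pi)) ^ (2 * a - 1) * ‖riemannZeta (circleMap ((a : ℂ) - t * I) R θ)‖ ^ 2 := by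
  have hpi := Real.pi_pos
  set x1 := a + R with hx1
  set K := (4 + x1 ^ 2) * x1 with hK
  have hx10 : 0 < x1 := by linarith
  have hK0 : 0 < K := by positivity
  refine ⟨(2 : ℝ) ^ (2 * x1 - 1) * Real.exp (2 * K) * 2, by positivity, fun t ht θ => ?_⟩
  have ht0 : 0 < t := by linarith
  set w := circleMap ((a : ℂ) - t * I) R θ with hw
  set x := a + R * Real.cos θ with hx
  set u := t - R * Real.sin θ with hu
  have hwe : w = (x : ℂ) - u * I := circle_eq a t R θ
  have hc1 := Real.cos_le_one θ
  have hc2 := Real.neg_one_le_cos θ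
  have hs1 := Real.sin_le_one θ
  have hs2 := Real.neg_one_le_sin θ
  have hu1 : 1 ≤ u := by nlinarith
  have hu2 : u ≤ 2 * t := by nlinarith
  have hxm : x ∈ Icc (1 / 2) x1 := by constructor <;> nlinarith
  have hexp : ‖cexp (-((Real.log (t / (2 * Real.pi)) : ℝ) * (w - ((a : ℂ) - t * I))))‖ ^ 2
      = (t / (2 * Real.pi)) ^ (-(2 * (R * Real.cos θ))) := by
    rw [norm_exp, Real.rpow_def_of_pos (by positivity), ← Real.exp_nat_mul]
    congr 1
    rw [hwe, hx]
    have hcr : (Complex.cos (θ : ℂ)).re = Real.cos θ := by rw [← ofReal_cos, ofReal_re]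
    simp
    rw [hcr]
    ring
  obtain ⟨δ, η, hδ, hη, hX⟩ := XX_norm hu1 hxm
  have hδ' : δ ≤ K := by
    refine (le_abs_self _).trans (hδ.trans ?_)
    rw [← hK]; exact div_le_self hK0.le hu1
  have hη' : η ≤ 1 := by
    refine (le_abs_self _).trans (hη.trans ?_)
    rw [div_le_one (by linarith)]; exact hu1
  have hη'' : -1 ≤ η := by
    have := neg_abs_le η
    have h2 : 1 / u ≤ 1 := by rw [div_le_one (by linarith)]; exact hu1
    linarith
  have hupow : (u / (2 * Real.pi)) ^ (2 * x - 1) ≤ (t / (2 * Real.pi)) ^ (2 * x - 1) * 2 ^ (2 * x1 - 1) := by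
    have e : u / (2 * Real.pi) = (t / (2 * Real.pi)) * (u / t) := by field_simp
    rw [e, Real.mul_rpow (by positivity) (by positivity)]
    gcongr
    have h2 : u / t ≤ 2 := by rw [div_le_iff₀ ht0]; exact hu2
    calc (u / t) ^ (2 * x - 1) ≤ 2 ^ (2 * x - 1) :=
          Real.rpow_le_rpow (by positivity) h2 (by linarith [hxm.1])
      _ ≤ _ := Real.rpow_le_rpow_of_exponent_le (by norm_num) (by linarith [hxm.2])
  have hXb : ‖XX w‖ ^ 2 ≤ (t / (2 * Real.pi)) ^ (2 * x - 1) * 2 ^ (2 * x1 - 1) * Real.exp (2 * K) * 2 := by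
    rw [hwe, hX]
    have : 0 ≤ 1 + η := by linarith
    gcongr
    linarith
  rw [norm_mul, mul_pow, hexp, hwe, zeta_fe hu1, ← hwe, norm_mul, mul_pow, ← mul_assoc]
  refine mul_le_mul_of_nonneg_right ?_ (by positivity)
  calc (t / (2 * Real.pi)) ^ (-(2 * (R * Real.cos θ))) * ‖XX w‖ ^ 2
      ≤ (t / (2 * Real.pi)) ^ (-(2 * (R * Real.cos θ))) * ((t / (2 * Real.pi)) ^ (2 * x - 1) * 2 ^ (2 * x1 - 1) * Real.exp (2 * K) * 2) := by
        gcongr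
    _ = ((t / (2 * Real.pi)) ^ (-(2 * (R * Real.cos θ))) * (t / (2 * Real.pi)) ^ (2 * x - 1)) * (2 ^ (2 * x1 - 1) * Real.exp (2 * K) * 2) := by ring
    _ = _ := by
      rw [← Real.rpow_add (by positivity), mul_comm]
      congr 2; rw [hx]; ring

end ZL

open Filter
namespace ZL
open Complex Set MeasureTheory Topology

lemma zc_cont {a R T : ℝ} (hR : 0 < R) (hR1 : R ≤ 1 / 2) :
    ContinuousOn (Function.uncurry fun t θ : ℝ => ‖riemannZeta (circleMap ((a : ℂ) - t * I) R θ)‖ ^ 2)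
      (Icc 20 T ×ˢ Icc 0 (2 * Real.pi)) := by
  refine ContinuousOn.pow (ContinuousOn.norm ?_) 2
  have hc : Continuous (fun p : ℝ × ℝ => circleMap ((a : ℂ) - p.1 * I) R p.2) := by
    unfold circleMap; fun_prop
  intro p hp
  have h1 : circleMap ((a : ℂ) - p.1 * I) R p.2 ≠ 1 := by
    rw [circle_eq]
    intro h
    have h2 := congrArg Complex.im h
    simp [-ofReal_sub, -ofReal_mul, -ofReal_add] at h2
    have := Real.sin_le_one p.2
    have := (mem_prod.1 hp).1.1
    nlinarith
  exact (ContinuousAt.comp (f := fun p : ℝ × ℝ => circleMap ((a : ℂ) - p.1 * I) R p.2) (x := p)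
    (differentiableAt_riemannZeta h1).continuousAt hc.continuousAt).continuousWithinAt

lemma zc_int {a R T : ℝ} (hR : 0 < R) (hR1 : R ≤ 1 / 2) :
    Integrable (Function.uncurry fun t θ : ℝ => ‖riemannZeta (circleMap ((a : ℂ) - t * I) R θ)‖ ^ 2)
      ((volume.restrict (Ioc 20 T)).prod (volume.restrict (Ioc 0 (2 * Real.pi)))) := by
  rw [Measure.prod_restrict]
  have h := (zc_cont (a := a) (T := T) hR hR1).integrableOn_compact (μ := volume.prod volume)
    (isCompact_Icc.prod isCompact_Icc)
  exact h.mono_set (prod_mono Ioc_subset_Icc_self Ioc_subset_Icc_self)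

lemma double_bound {a R : ℝ} (hR : 0 < R) (hR1 : R ≤ 1 / 2) (ha : 1 / 2 < a - R) :
    ∃ C : ℝ, 0 < C ∧ ∀ T : ℝ, 20 ≤ T →
      ∫ t in Ioc 20 T, ∫ θ in Ioc 0 (2 * Real.pi), ‖riemannZeta (circleMap ((a : ℂ) - t * I) R θ)‖ ^ 2
        ≤ C * T := by
  have hpi := Real.pi_pos
  obtain ⟨C, hC, hb⟩ := ms_unif (x1 := a + R) ha
  refine ⟨C * 2 * (2 * Real.pi), by positivity, fun T hT => ?_⟩
  rw [integral_integral_swap (zc_int hR hR1)]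
  have hin : ∀ θ : ℝ, ∫ t in Ioc 20 T, ‖riemannZeta (circleMap ((a : ℂ) - t * I) R θ)‖ ^ 2 ≤ C * 2 * T := by
    intro θ
    set x := a + R * Real.cos θ with hx
    set c := R * Real.sin θ with hc
    have hc1 := Real.cos_le_one θ
    have hc2 := Real.neg_one_le_cos θ
    have hs1 := Real.sin_le_one θ
    have hs2 := Real.neg_one_le_sin θ
    have hc3 : c ≤ 1 := by nlinarith
    have hc4 : -1 ≤ c := by nlinarith
    have hxm : x ∈ Icc (a - R) (a + R) := by constructor <;> nlinarith
    have e : ∀ t : ℝ, circleMap ((a : ℂ) - t * I) R θ = (x : ℂ) - ((t - c : ℝ) : ℂ) * I :=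
      fun t => circle_eq a t R θ
    simp_rw [e]
    rw [← intervalIntegral.integral_of_le hT,
      intervalIntegral.integral_comp_sub_right (fun u : ℝ => ‖riemannZeta ((x : ℂ) - (u : ℂ) * I)‖ ^ 2) c,
      intervalIntegral.integral_of_le (by linarith)]
    have h1 : ∫ u in Ioc (20 - c) (T - c), ‖riemannZeta ((x : ℂ) - (u : ℂ) * I)‖ ^ 2
        ≤ ∫ u in Ioc 1 (T + 1), ‖riemannZeta ((x : ℂ) - (u : ℂ) * I)‖ ^ 2 := by
      refine setIntegral_mono_set ?_ (ae_of_all _ fun _ => by positivity) (HasSubset.Subset.eventuallyLE ?_)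
      · refine (ContinuousOn.integrableOn_Icc ?_).mono_set Ioc_subset_Icc_self
        exact (((zeta_line_cont x).mono fun t ht => ht.1).norm).pow 2
      · exact Ioc_subset_Ioc (by linarith) (by linarith)
    refine h1.trans ((hb x hxm (T + 1) (by linarith)).trans ?_)
    nlinarith
  have hfin := norm_setIntegral_le_of_norm_le_const (μ := volume) (s := Ioc 0 (2 * Real.pi)) (C := C * 2 * T)
    (f := fun θ => ∫ t in Ioc 20 T, ‖riemannZeta (circleMap ((a : ℂ) - t * I) R θ)‖ ^ 2)
    (by rw [Real.volume_Ioc]; exact ENNReal.ofReal_lt_top) (fun θ _ => by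
      rw [Real.norm_of_nonneg (integral_nonneg fun _ => by positivity)]
      exact hin θ)
  refine (le_abs_self _).trans (hfin.trans (le_of_eq ?_))
  rw [Measure.real, Real.volume_Ioc, ENNReal.toReal_ofReal (by linarith)]
  ring

lemma log_ge_one {t : ℝ} (ht : 20 ≤ t) : 1 ≤ Real.log (t / (2 * Real.pi)) := by
  have hpi := Real.pi_pos
  rw [Real.le_log_iff_exp_le (by positivity), le_div_iff₀ (by positivity)]
  have h1 := Real.exp_one_lt_d9
  have h2 := Real.pi_lt_d2
  nlinarith

lemma err_bound {a : ℝ} (ha : 1 / 2 < a) {l : ℕ} (hl : 1 ≤ l) :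
    ∃ C : ℝ, 0 < C ∧ ∀ T : ℝ, 20 ≤ T →
      ∫ t in Ioc 20 T, ‖iteratedDeriv l (fun w => riemannZeta (1 - w)) ((a : ℂ) - t * I)
          - ((Real.log (t / (2 * Real.pi)) : ℝ) : ℂ) ^ l * riemannZeta (1 - ((a : ℂ) - t * I))‖ ^ 2
        ≤ C * (T ^ (2 * a) * (Real.log (T / (2 * Real.pi)) ^ (l - 1)) ^ 2) := by
  have hpi := Real.pi_pos
  set R := min (1 / 2) ((a - 1 / 2) / 2) with hRdef
  have hR : 0 < R := lt_min (by norm_num) (by linarith)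
  have hR1 : R ≤ 1 / 2 := min_le_left _ _
  have hR2 : 1 / 2 < a - R := by
    have : R ≤ (a - 1 / 2) / 2 := min_le_right _ _
    linarith
  obtain ⟨C1, hC1, h1⟩ := H_bound hR hR1 hR2
  obtain ⟨C2, hC2, h2⟩ := double_bound hR hR1 hR2
  have hKK : 0 ≤ KK l R := Finset.sum_nonneg fun i _ => by positivity
  refine ⟨KK l R ^ 2 * C1 * C2 + 1, by positivity, fun T hT => ?_⟩
  have hT0 : 0 < T := by linarith
  set LT := Real.log (T / (2 * Real.pi)) with hLT
  have hLT1 : 1 ≤ LT := log_ge_one hT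
  set Jt : ℝ → ℝ := fun t => ∫ θ in Ioc 0 (2 * Real.pi), ‖riemannZeta (circleMap ((a : ℂ) - t * I) R θ)‖ ^ 2 with hJt
  have hJi : IntegrableOn Jt (Ioc 20 T) := (zc_int (a := a) (T := T) hR hR1).integral_prod_left
  have hJ0 : ∀ t, 0 ≤ Jt t := fun t => integral_nonneg fun _ => by positivity
  set c := (LT ^ (l - 1) * KK l R) ^ 2 * (C1 * T ^ (2 * a - 1)) with hc
  have hc0 : 0 ≤ c := by positivity
  have hpt : ∀ t ∈ Ioc 20 T, ‖iteratedDeriv l (fun w => riemannZeta (1 - w)) ((a : ℂ) - t * I)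
          - ((Real.log (t / (2 * Real.pi)) : ℝ) : ℂ) ^ l * riemannZeta (1 - ((a : ℂ) - t * I))‖ ^ 2 ≤ c * Jt t := by
    intro t ht
    have ht20 : 20 ≤ t := ht.1.le
    have ht0 : 0 < t := by linarith
    set L := Real.log (t / (2 * Real.pi)) with hL
    have hL1 : 1 ≤ L := log_ge_one ht20
    have hLL : L ≤ LT := Real.log_le_log (by positivity) (by gcongr; exact ht.2)
    have hdf : DifferentiableOn ℂ (fun w => riemannZeta (1 - w)) (Metric.closedBall ((a : ℂ) - t * I) R) := by
      intro w hw
      have hw0 : (1 : ℂ) - w ≠ 1 := by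
        intro h
        have h0 : w = 0 := by linear_combination -h
        rw [h0, Metric.mem_closedBall, dist_eq_norm] at hw
        have h3 := abs_im_le_norm (0 - ((a : ℂ) - t * I))
        simp at h3
        rw [abs_of_pos ht0] at h3
        simp at hw
        linarith
      have := (differentiableAt_riemannZeta hw0)
      exact (DifferentiableAt.comp (f := fun w : ℂ => 1 - w) w this (by fun_prop)).differentiableWithinAt
    refine (deriv_approx hl hR hL1 hdf).trans ?_
    have hJc : IntegrableOn (fun θ : ℝ => C1 * (t / (2 * Real.pi)) ^ (2 * a - 1) * ‖riemannZeta (circleMap ((a : ℂ) - t * I) R θ)‖ ^ 2) (Ioc 0 (2 * Real.pi)) := by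
      refine Integrable.const_mul ?_ _
      have := (zc_cont (a := a) (T := T) hR hR1).comp (f := fun θ : ℝ => (t, θ)) (s := Icc 0 (2 * Real.pi))
        (by fun_prop) (fun θ hθ => ⟨⟨ht20, ht.2⟩, hθ⟩)
      exact (this.integrableOn_Icc).mono_set Ioc_subset_Icc_self
    have hle : ∫ θ in (0:ℝ)..(2 * Real.pi),
        ‖cexp (-(L * (circleMap ((a : ℂ) - t * I) R θ - ((a : ℂ) - t * I)))) * riemannZeta (1 - circleMap ((a : ℂ) - t * I) R θ)‖ ^ 2
        ≤ C1 * T ^ (2 * a - 1) * Jt t := by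
      rw [intervalIntegral.integral_of_le (by positivity)]
      refine (integral_mono_of_nonneg (ae_of_all _ fun _ => by positivity) hJc
        (ae_of_all _ fun θ => h1 t (by linarith) θ)).trans ?_
      rw [integral_const_mul]
      have hh := hJ0 t
      gcongr
      · linarith
      · refine (div_le_self ht0.le ?_).trans ht.2
        linarith [Real.pi_gt_three]
    calc (L ^ (l - 1) * KK l R) ^ 2 * _ ≤ (LT ^ (l - 1) * KK l R) ^ 2 * (C1 * T ^ (2 * a - 1) * Jt t) := by
          gcongr
          exact intervalIntegral.integral_nonneg (by positivity) fun _ _ => by positivity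
      _ = c * Jt t := by rw [hc]; ring
  have hfin : ∫ t in Ioc 20 T, ‖iteratedDeriv l (fun w => riemannZeta (1 - w)) ((a : ℂ) - t * I)
          - ((Real.log (t / (2 * Real.pi)) : ℝ) : ℂ) ^ l * riemannZeta (1 - ((a : ℂ) - t * I))‖ ^ 2
      ≤ ∫ t in Ioc 20 T, c * Jt t := by
    refine integral_mono_of_nonneg (ae_of_all _ fun _ => by positivity) (hJi.const_mul c) ?_
    exact (ae_restrict_iff' measurableSet_Ioc).2 (ae_of_all _ hpt)
  refine hfin.trans ?_
  rw [integral_const_mul]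
  have e : T ^ (2 * a) = T ^ (2 * a - 1) * T := by
    rw [← Real.rpow_add_one hT0.ne']; congr 1; ring
  calc c * _ ≤ c * (C2 * T) := by gcongr; exact h2 T hT
    _ = (KK l R ^ 2 * C1 * C2) * (T ^ (2 * a) * (LT ^ (l - 1)) ^ 2) := by rw [hc, e]; ring
    _ ≤ _ := by gcongr; linarith

end ZL

open Filter
namespace ZL
open Complex Set MeasureTheory Topology

lemma ii_of_contOn {f : ℝ → ℝ} (hf : ContinuousOn f (Ioi 1)) {x y : ℝ} (hx : 20 ≤ x) (hy : 20 ≤ y) :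
    IntervalIntegrable f volume x y := by
  refine (hf.mono ?_).intervalIntegrable
  intro t ht
  have := ht.1
  have h2 : 20 ≤ min x y := le_min hx hy
  exact lt_of_lt_of_le (by norm_num) (h2.trans this)

lemma abel {f g g' : ℝ → ℝ} {c : ℝ} (hf : ContinuousOn f (Ioi 1))
    (hF : Tendsto (fun T => (∫ t in (20:ℝ)..T, f t) / T) atTop (𝓝 c))
    (hg : ∀ t, 20 ≤ t → HasDerivAt g (g' t) t) (hg0 : ∀ t, 20 ≤ t → 0 ≤ g' t)
    (hgc : ContinuousOn g' (Ici 20)) (hgp : ∀ t, 20 ≤ t → 0 < g t) :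
    Tendsto (fun T => ((∫ t in (20:ℝ)..T, f t * g t) - c * ∫ t in (20:ℝ)..T, g t) / (T * g T)) atTop (𝓝 0) := by
  set H : ℝ → ℝ := fun T => ∫ t in (20:ℝ)..T, (f t - c) with hH
  have hfc : ContinuousOn (fun t => f t - c) (Ioi 1) := hf.sub continuousOn_const
  have hHd : ∀ t, 20 ≤ t → HasDerivAt H (f t - c) t := by
    intro t ht
    have ht1 : (1:ℝ) < t := by linarith
    refine intervalIntegral.integral_hasDerivAt_right (ii_of_contOn hfc le_rfl ht)
      (hfc.stronglyMeasurableAtFilter isOpen_Ioi t ht1) (hfc.continuousAt (Ioi_mem_nhds ht1))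
  have hHc : ContinuousOn H (Ici 20) := fun t ht => (hHd t ht).continuousAt.continuousWithinAt
  have hgcont : ContinuousOn g (Ici 20) := fun t ht => (hg t ht).continuousAt.continuousWithinAt
  have hHT : Tendsto (fun T => H T / T) atTop (𝓝 0) := by
    have h1 : Tendsto (fun T : ℝ => (∫ t in (20:ℝ)..T, f t) / T - (c - 20 * c * T⁻¹)) atTop (𝓝 (c - (c - 20 * c * 0))) :=
      hF.sub (tendsto_const_nhds.sub (tendsto_inv_atTop_zero.const_mul _))
    simp only [mul_zero, sub_zero, sub_self] at h1
    refine h1.congr' ?_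
    filter_upwards [eventually_ge_atTop 20] with T hT
    have hT0 : 0 < T := by linarith
    rw [hH]
    simp only
    rw [intervalIntegral.integral_sub (ii_of_contOn hf le_rfl hT) (by simp)]
    simp
    field_simp
  rw [Metric.tendsto_atTop]
  intro ε hε
  obtain ⟨T1, hT1⟩ := (Metric.tendsto_atTop.1 hHT) (ε/8) (by positivity)
  obtain ⟨M, hM⟩ := (isCompact_Icc (a := (20:ℝ)) (b := max T1 20)).exists_bound_of_continuousOn (f := H)
    (hHc.mono Icc_subset_Ici_self)
  have hM0 : 0 ≤ M := (norm_nonneg _).trans (hM 20 ⟨le_rfl, le_max_right _ _⟩)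
  have hb : ∀ t, 20 ≤ t → |H t| ≤ M + ε/8 * t := by
    intro t ht
    have ht0 : 0 < t := by linarith
    rcases le_total t (max T1 20) with h | h
    · have := hM t ⟨ht, h⟩
      rw [Real.norm_eq_abs] at this
      have : 0 ≤ ε / 8 * t := by positivity
      linarith
    · have := hT1 t ((le_max_left _ _).trans h)
      rw [Real.dist_eq, sub_zero, abs_div, abs_of_pos ht0, div_lt_iff₀ ht0] at this
      linarith
  refine ⟨max 20 (8 * M / ε), fun T hT => ?_⟩
  have hT20 : 20 ≤ T := (le_max_left _ _).trans hT
  have hT0 : 0 < T := by linarith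
  have hTM : M ≤ ε/8 * T := by
    have := (le_max_right _ _).trans hT
    rw [div_le_iff₀ hε] at this
    linarith
  have hsub : uIcc 20 T ⊆ Ici (20:ℝ) := by rw [uIcc_of_le hT20]; exact Icc_subset_Ici_self
  have hgii : IntervalIntegrable g' volume 20 T := (hgc.mono hsub).intervalIntegrable
  have hgi : IntervalIntegrable g volume 20 T := (hgcont.mono hsub).intervalIntegrable
  have ibp := intervalIntegral.integral_deriv_mul_eq_sub (a := 20) (b := T) (u := H) (v := g)
    (u' := fun t => f t - c) (v' := g') (fun t ht => hHd t (hsub ht)) (fun t ht => hg t (hsub ht))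
    (ii_of_contOn hfc le_rfl hT20) hgii
  have hH20 : H 20 = 0 := by simp [hH]
  have hfsub : ContinuousOn f (uIcc 20 T) := hf.mono (hsub.trans fun x (hx : 20 ≤ x) => by
    show 1 < x; linarith)
  have i1 : IntervalIntegrable (fun t => f t * g t) volume 20 T :=
    (hfsub.mul (hgcont.mono hsub)).intervalIntegrable
  have i2 : IntervalIntegrable (fun t => H t * g' t) volume 20 T :=
    ((hHc.mono hsub).mul (hgc.mono hsub)).intervalIntegrable
  have e1 : (∫ t in (20:ℝ)..T, f t * g t) - c * ∫ t in (20:ℝ)..T, g t = H T * g T - ∫ t in (20:ℝ)..T, H t * g' t := by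
    have : ∀ t, (f t - c) * g t + H t * g' t = (f t * g t - c * g t) + H t * g' t := fun t => by ring
    simp only [this] at ibp
    rw [intervalIntegral.integral_add (i1.sub (hgi.const_mul c)) i2, intervalIntegral.integral_sub i1 (hgi.const_mul c),
      intervalIntegral.integral_const_mul, hH20] at ibp
    linarith
  have e2 : |∫ t in (20:ℝ)..T, H t * g' t| ≤ (M + ε/8*T) * g T := by
    have h1 : ‖∫ t in (20:ℝ)..T, H t * g' t‖ ≤ ∫ t in (20:ℝ)..T, (M + ε/8*T) * g' t := by
      refine intervalIntegral.norm_integral_le_of_norm_le hT20 (ae_of_all _ fun t ht => ?_) (hgii.const_mul _)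
      have ht20 : 20 ≤ t := ht.1.le
      rw [norm_mul, Real.norm_eq_abs, Real.norm_eq_abs, abs_of_nonneg (hg0 t ht20)]
      refine mul_le_mul_of_nonneg_right ((hb t ht20).trans ?_) (hg0 t ht20)
      have := ht.2
      gcongr
    rw [intervalIntegral.integral_const_mul,
      intervalIntegral.integral_eq_sub_of_hasDerivAt (fun t ht => hg t (hsub ht)) hgii] at h1
    refine h1.trans ?_
    have := hgp 20 le_rfl
    have : 0 ≤ M + ε / 8 * T := by positivity
    gcongr
    linarith
  have hgT := hgp T hT20
  rw [Real.dist_eq, sub_zero, e1, abs_div, abs_of_pos (mul_pos hT0 hgT), div_lt_iff₀ (mul_pos hT0 hgT)]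
  have e3 : |H T * g T| ≤ (M + ε/8*T) * g T := by
    rw [abs_mul, abs_of_pos hgT]
    exact mul_le_mul_of_nonneg_right (hb T hT20) hgT.le
  calc |H T * g T - ∫ t in (20:ℝ)..T, H t * g' t| ≤ |H T * g T| + |∫ t in (20:ℝ)..T, H t * g' t| := abs_sub _ _
    _ ≤ (M + ε/8*T) * g T + (M + ε/8*T) * g T := add_le_add e3 e2
    _ ≤ (ε/8*T + ε/8*T) * g T + (ε/8*T + ε/8*T) * g T := by gcongr
    _ < ε * (T * g T) := by nlinarith [mul_pos hε (mul_pos hT0 hgT)]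

lemma replace_mean {f f2 : ℝ → ℝ} {c : ℝ} (hf : ContinuousOn f (Ioi 1)) (hf2 : ContinuousOn f2 (Ioi 1))
    (hf0 : ∀ t, 0 ≤ f t)
    (hF : Tendsto (fun T => (∫ t in (20:ℝ)..T, f t) / T) atTop (𝓝 c))
    (h : ∀ ε > 0, ∀ᶠ t in atTop, |f2 t - f t| ≤ ε * f t) :
    Tendsto (fun T => (∫ t in (20:ℝ)..T, f2 t) / T) atTop (𝓝 c) := by
  have key : Tendsto (fun T => (∫ t in (20:ℝ)..T, (f2 t - f t)) / T) atTop (𝓝 0) := by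
    rw [Metric.tendsto_atTop]
    intro ε hε
    have hc : 0 < |c| + 1 := by positivity
    obtain ⟨T1, hT1⟩ := eventually_atTop.1 (h (ε / (2 * (|c| + 1))) (by positivity))
    obtain ⟨T2, hT2⟩ := (Metric.tendsto_atTop.1 hF) 1 one_pos
    set S := max 20 T1 with hS
    have hS20 : 20 ≤ S := le_max_left _ _
    set M := ∫ t in (20:ℝ)..S, |f2 t - f t| with hM
    have hM0 : 0 ≤ M := intervalIntegral.integral_nonneg hS20 fun _ _ => abs_nonneg _
    have hdc : ContinuousOn (fun t => |f2 t - f t|) (Ioi 1) := (hf2.sub hf).abs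
    refine ⟨max (max S T2) (2 * M / ε + 1), fun T hT => ?_⟩
    have hTS : S ≤ T := (le_max_left _ _).trans ((le_max_left _ _).trans hT)
    have hT2' : T2 ≤ T := (le_max_right _ _).trans ((le_max_left _ _).trans hT)
    have hTM : M < ε / 2 * T := by
      have := (le_max_right _ _).trans hT
      have : 2 * M / ε < T := by linarith
      rw [div_lt_iff₀ hε] at this
      linarith
    have hT20 : 20 ≤ T := hS20.trans hTS
    have hT0 : 0 < T := by linarith
    rw [Real.dist_eq, sub_zero, abs_div, abs_of_pos hT0, div_lt_iff₀ hT0]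
    have a1 : |∫ t in (20:ℝ)..T, (f2 t - f t)| ≤ ∫ t in (20:ℝ)..T, |f2 t - f t| :=
      intervalIntegral.abs_integral_le_integral_abs hT20
    have a2 : ∫ t in (20:ℝ)..T, |f2 t - f t| = M + ∫ t in S..T, |f2 t - f t| :=
      (intervalIntegral.integral_add_adjacent_intervals (ii_of_contOn hdc le_rfl hS20) (ii_of_contOn hdc hS20 hT20)).symm
    have a3 : ∫ t in S..T, |f2 t - f t| ≤ ∫ t in S..T, ε / (2 * (|c| + 1)) * f t := by
      refine intervalIntegral.integral_mono_on hTS (ii_of_contOn hdc hS20 hT20)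
        ((ii_of_contOn hf hS20 hT20).const_mul _) fun t ht => hT1 t ((le_max_right _ _).trans ht.1)
    rw [intervalIntegral.integral_const_mul] at a3
    have a4 : ∫ t in (20:ℝ)..T, f t = (∫ t in (20:ℝ)..S, f t) + ∫ t in S..T, f t :=
      (intervalIntegral.integral_add_adjacent_intervals (ii_of_contOn hf le_rfl hS20) (ii_of_contOn hf hS20 hT20)).symm
    have a5 : 0 ≤ ∫ t in (20:ℝ)..S, f t := intervalIntegral.integral_nonneg hS20 fun _ _ => hf0 _
    have a6 : ∫ t in (20:ℝ)..T, f t ≤ (|c| + 1) * T := by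
      have := hT2 T hT2'
      rw [Real.dist_eq, abs_lt] at this
      have := this.2
      rw [← div_le_iff₀ hT0]
      linarith [le_abs_self c]
    have a7 : ε / (2 * (|c| + 1)) * ∫ t in S..T, f t ≤ ε / (2 * (|c| + 1)) * ((|c| + 1) * T) := by
      gcongr
      linarith
    have a8 : ε / (2 * (|c| + 1)) * ((|c| + 1) * T) = ε / 2 * T := by field_simp
    linarith
  have := key.add hF
  rw [zero_add] at this
  refine this.congr' ?_
  filter_upwards [eventually_ge_atTop 20] with T hT
  rw [intervalIntegral.integral_sub (ii_of_contOn hf2 le_rfl hT) (ii_of_contOn hf le_rfl hT)]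
  ring

end ZL

open Filter
namespace ZL
open Complex Set MeasureTheory Topology

noncomputable def gg (p : ℝ) (n : ℕ) (t : ℝ) : ℝ := (t / (2 * Real.pi)) ^ p * Real.log (t / (2 * Real.pi)) ^ n

lemma gg_deriv (p : ℝ) {n : ℕ} (hn : 1 ≤ n) {t : ℝ} (ht : 20 ≤ t) :
    HasDerivAt (gg p n) ((p * gg p n t + n * gg p (n-1) t) / t) t := by
  have h0 : 0 < t / (2 * Real.pi) := by positivity
  have hp := Real.pi_pos
  have ht0 : 0 < t := by linarith
  have h1 : HasDerivAt (fun t : ℝ => t / (2 * Real.pi)) (1 / (2 * Real.pi)) t := (hasDerivAt_id t).div_const _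
  have h2 := (h1.rpow_const (p := p) (Or.inl h0.ne')).mul ((h1.log h0.ne').pow n)
  refine h2.congr_deriv ?_
  unfold gg
  rw [Real.rpow_sub_one h0.ne', Pi.pow_apply]
  field_simp

lemma gg_pos (p : ℝ) (n : ℕ) {t : ℝ} (ht : 20 ≤ t) : 0 < gg p n t := by
  have := log_ge_one ht
  unfold gg
  positivity

lemma gg_cont (p : ℝ) (n : ℕ) : ContinuousOn (gg p n) (Ici 20) := by
  intro t ht
  have ht0 : (20:ℝ) ≤ t := ht
  have h0 : t / (2 * Real.pi) ≠ 0 := by positivity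
  refine ContinuousAt.continuousWithinAt ?_
  have h1 : ContinuousAt (fun t : ℝ => t / (2 * Real.pi)) t := by fun_prop
  exact (h1.rpow_const (Or.inl h0)).mul ((h1.log h0).pow n)

lemma gg_mono {p : ℝ} (hp : 0 < p) (n : ℕ) {s t : ℝ} (hs : 20 ≤ s) (hst : s ≤ t) : gg p n s ≤ gg p n t := by
  have := log_ge_one hs
  have ht0 : 0 ≤ t := by linarith
  unfold gg
  gcongr

lemma gg_int {p : ℝ} (hp : 0 < p) {n : ℕ} (hn : 1 ≤ n) :
    Tendsto (fun T => (∫ t in (20:ℝ)..T, gg p n t) / (T * gg p n T)) atTop (𝓝 (1 / (p + 1))) := by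
  have hlogT : Tendsto (fun T : ℝ => Real.log (T / (2 * Real.pi))) atTop atTop :=
    Real.tendsto_log_atTop.comp (tendsto_id.atTop_div_const (by positivity))
  have hii : ∀ m, ∀ T : ℝ, 20 ≤ T → IntervalIntegrable (gg p m) volume 20 T := fun m T hT =>
    ((gg_cont p m).mono (by rw [uIcc_of_le hT]; exact Icc_subset_Ici_self)).intervalIntegrable
  have hid : ∀ T : ℝ, 20 ≤ T → T * gg p n T - 20 * gg p n 20 =
      (p + 1) * (∫ t in (20:ℝ)..T, gg p n t) + n * ∫ t in (20:ℝ)..T, gg p (n-1) t := by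
    intro T hT
    have hd : ∀ t ∈ uIcc 20 T, HasDerivAt (fun t => t * gg p n t) ((p + 1) * gg p n t + n * gg p (n-1) t) t := by
      intro t ht
      rw [uIcc_of_le hT] at ht
      have ht0 : 0 < t := by linarith [ht.1]
      refine ((hasDerivAt_id t).mul (gg_deriv p hn ht.1)).congr_deriv ?_
      simp only [id]
      field_simp
      ring
    have := intervalIntegral.integral_eq_sub_of_hasDerivAt hd (((hii n T hT).const_mul _).add ((hii (n-1) T hT).const_mul _))
    rw [← this, intervalIntegral.integral_add ((hii n T hT).const_mul _) ((hii (n-1) T hT).const_mul _),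
      intervalIntegral.integral_const_mul, intervalIntegral.integral_const_mul]
  have hr : ∀ T : ℝ, 20 ≤ T → gg p n T = gg p (n-1) T * Real.log (T / (2 * Real.pi)) := by
    intro T _
    unfold gg
    obtain ⟨m, rfl⟩ : ∃ m, n = m + 1 := ⟨n - 1, by omega⟩
    simp [pow_succ, mul_assoc]
  have b1 : Tendsto (fun T => (∫ t in (20:ℝ)..T, gg p (n-1) t) / (T * gg p n T)) atTop (𝓝 0) := by
    refine squeeze_zero' (g := fun T => (Real.log (T / (2 * Real.pi)))⁻¹) ?_ ?_ hlogT.inv_tendsto_atTop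
    · filter_upwards [eventually_ge_atTop 20] with T hT
      have := gg_pos p n hT
      exact div_nonneg (intervalIntegral.integral_nonneg hT fun t ht => (gg_pos p _ ht.1).le) (by positivity)
    · filter_upwards [eventually_ge_atTop 20] with T hT
      have h1 := gg_pos p (n-1) hT
      have h3 := log_ge_one hT
      have h2 : ∫ t in (20:ℝ)..T, gg p (n-1) t ≤ ∫ t in (20:ℝ)..T, gg p (n-1) T :=
        intervalIntegral.integral_mono_on hT (hii _ T hT) (by simp) fun t ht => gg_mono hp _ ht.1 ht.2
      simp only [intervalIntegral.integral_const, smul_eq_mul] at h2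
      rw [hr T hT, div_le_iff₀ (by positivity)]
      have : (Real.log (T / (2 * Real.pi)))⁻¹ * (T * (gg p (n-1) T * Real.log (T / (2 * Real.pi)))) = T * gg p (n-1) T := by
        field_simp
      rw [this]
      linarith
  have b2 : Tendsto (fun T => 20 * gg p n 20 / (T * gg p n T)) atTop (𝓝 0) := by
    refine squeeze_zero' (g := fun T : ℝ => 20 * T⁻¹) ?_ ?_ (by simpa using tendsto_inv_atTop_zero.const_mul (20:ℝ))
    · filter_upwards [eventually_ge_atTop 20] with T hT
      have := gg_pos p n hT
      have := gg_pos p n (le_refl 20)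
      positivity
    · filter_upwards [eventually_ge_atTop 20] with T hT
      have h1 := gg_pos p n hT
      have h2 := gg_mono hp n le_rfl hT
      rw [div_le_iff₀ (by positivity)]
      have : 20 * T⁻¹ * (T * gg p n T) = 20 * gg p n T := by field_simp
      rw [this]
      linarith
  have b3 := (((tendsto_const_nhds (x := (1:ℝ))).sub b2).sub (b1.const_mul (n:ℝ))).div_const (p + 1)
  simp only [mul_zero, sub_zero] at b3
  refine b3.congr' ?_
  filter_upwards [eventually_ge_atTop 20] with T hT
  have h1 := gg_pos p n hT
  have h2 := hid T hT
  have h3 : 0 < T * gg p n T := by positivity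
  rw [eq_div_iff h3.ne']
  have : (1 - 20 * gg p n 20 / (T * gg p n T) - n * ((∫ t in (20:ℝ)..T, gg p (n-1) t) / (T * gg p n T))) / (p + 1) * (T * gg p n T)
     = (T * gg p n T - 20 * gg p n 20 - n * ∫ t in (20:ℝ)..T, gg p (n-1) t) / (p + 1) := by
    field_simp
  rw [this, h2]
  field_simp
  ring

lemma main_gg {f : ℝ → ℝ} {c p : ℝ} {n : ℕ} (hp : 0 < p) (hn : 1 ≤ n) (hf : ContinuousOn f (Ioi 1))
    (hF : Tendsto (fun T => (∫ t in (20:ℝ)..T, f t) / T) atTop (𝓝 c)) :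
    Tendsto (fun T => (∫ t in (20:ℝ)..T, f t * gg p n t) / (T * gg p n T)) atTop (𝓝 (c / (p + 1))) := by
  have h1 := abel hf hF (fun t ht => gg_deriv p hn ht)
    (fun t ht => by
      have := gg_pos p n ht
      have := gg_pos p (n-1) ht
      positivity)
    (by
      refine ContinuousOn.div ((continuousOn_const.mul (gg_cont p n)).add (continuousOn_const.mul (gg_cont p (n-1))))
        continuousOn_id ?_
      intro t (ht : 20 ≤ t)
      positivity)
    (fun t ht => gg_pos p n ht)
  have h2 := h1.add ((gg_int hp hn).const_mul c)
  rw [zero_add, mul_one_div] at h2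
  refine h2.congr fun T => ?_
  ring

lemma main_asymp {a : ℝ} (ha : 1/2 < a) {l : ℕ} (hl : 1 ≤ l) :
    Tendsto (fun T => (∫ t in (20:ℝ)..T, ‖((Real.log (t / (2 * Real.pi)) : ℝ) : ℂ) ^ l * riemannZeta (1 - ((a : ℂ) - t * I))‖ ^ 2)
      / (T * gg (2 * a - 1) (2 * l) T)) atTop (𝓝 ((riemannZeta ((2 * a : ℝ) : ℂ)).re / (2 * a))) := by
  set f : ℝ → ℝ := fun t => ‖riemannZeta ((a : ℂ) - t * I)‖ ^ 2 with hfdef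
  set f2 : ℝ → ℝ := fun t => ‖riemannZeta (1 - ((a : ℂ) - t * I))‖ ^ 2 * (t / (2 * Real.pi)) ^ (-(2 * a - 1)) with hf2def
  have hpi := Real.pi_pos
  have hf : ContinuousOn f (Ioi 1) := ((zeta_line_cont a).mono Ioi_subset_Ici_self).norm.pow 2
  have hf2 : ContinuousOn f2 (Ioi 1) := by
    refine ContinuousOn.mul (ContinuousOn.pow (ContinuousOn.norm ?_) 2) ?_
    · intro t (ht : 1 < t)
      refine ContinuousAt.continuousWithinAt ?_
      have : ContinuousAt riemannZeta (1 - ((a : ℂ) - t * I)) := by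
        refine (differentiableAt_riemannZeta ?_).continuousAt
        intro h
        have := congrArg Complex.im h
        simp at this
        linarith
      exact ContinuousAt.comp (f := fun t : ℝ => 1 - ((a : ℂ) - t * I)) this (by fun_prop)
    · intro t (ht : 1 < t)
      refine ContinuousAt.continuousWithinAt ?_
      have h1 : ContinuousAt (fun t : ℝ => t / (2 * Real.pi)) t := by fun_prop
      exact h1.rpow_const (Or.inl (by positivity))
  have hF : Tendsto (fun T => (∫ t in (20:ℝ)..T, f t) / T) atTop (𝓝 (riemannZeta ((2 * a : ℝ) : ℂ)).re) := by
    have h1 := (mean_sq ha).sub (tendsto_inv_atTop_zero.const_mul (∫ t in Ioc (1:ℝ) 20, f t))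
    rw [mul_zero, sub_zero] at h1
    refine h1.congr' ?_
    filter_upwards [eventually_ge_atTop 20] with T hT
    have hc : ContinuousOn f (Ici 1) := (zeta_line_cont a).norm.pow 2
    have := intervalIntegral.integral_add_adjacent_intervals (f := f) (a := 1) (b := 20) (c := T) (μ := volume)
      (hc.mono (by rw [uIcc_of_le (by norm_num)]; exact Icc_subset_Ici_self)).intervalIntegrable
      (ii_of_contOn hf le_rfl hT)
    rw [intervalIntegral.integral_of_le (by norm_num), intervalIntegral.integral_of_le (a := 1) (b := T) (by linarith)] at this
    rw [← this]
    ring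
  have hF2 : Tendsto (fun T => (∫ t in (20:ℝ)..T, f2 t) / T) atTop (𝓝 (riemannZeta ((2 * a : ℝ) : ℂ)).re) := by
    refine replace_mean hf hf2 (fun t => by positivity) hF ?_
    intro ε hε
    set D := (4 + a ^ 2) * a with hD
    have hD0 : 0 < D := by positivity
    filter_upwards [eventually_ge_atTop 20, eventually_ge_atTop (2 * D), eventually_ge_atTop ((8 * D + 1) / ε)] with t h20 h2D hK
    obtain ⟨δ, θ, hδ, hθ, hX⟩ := XX_norm (x := a) (x1 := a) (t := t) (by linarith) ⟨ha.le, le_rfl⟩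
    have ht0 : 0 < t := by linarith
    have h1 : |2 * δ| ≤ 2 * D / t := by
      rw [abs_mul, abs_of_pos (by norm_num : (0:ℝ) < 2), mul_div_assoc]
      gcongr
    have h2 : |2 * δ| ≤ 1 := h1.trans (by rw [div_le_one ht0]; exact h2D)
    have h3 := Real.abs_exp_sub_one_le h2
    have h4 : |θ| ≤ 1 := hθ.trans (by rw [div_le_one ht0]; linarith)
    have hφ : |Real.exp (2 * δ) * (1 + θ) - 1| ≤ ε := by
      have e : Real.exp (2 * δ) * (1 + θ) - 1 = (Real.exp (2 * δ) - 1) * (1 + θ) + θ := by ring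
      rw [e]
      have h5 : |1 + θ| ≤ 2 := by rw [abs_le] at h4 ⊢; constructor <;> linarith
      calc _ ≤ |(Real.exp (2 * δ) - 1) * (1 + θ)| + |θ| := abs_add_le _ _
        _ ≤ 2 * (2 * D / t) * 2 + 1 / t := by
            rw [abs_mul]
            have := abs_nonneg (Real.exp (2 * δ) - 1)
            gcongr
            linarith
        _ = (8 * D + 1) / t := by ring
        _ ≤ ε := by
            rw [div_le_iff₀ hε] at hK
            rw [div_le_iff₀ ht0]; linarith
    have h0 : 0 < t / (2 * Real.pi) := by positivity
    have : f2 t = f t * (Real.exp (2 * δ) * (1 + θ)) := by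
      rw [hf2def, hfdef]
      simp only
      rw [zeta_fe (by linarith), norm_mul, mul_pow, hX, Real.rpow_neg h0.le]
      have := Real.rpow_pos_of_pos h0 (2 * a - 1)
      field_simp
    have hft : 0 ≤ f t := by positivity
    rw [this, show f t * (Real.exp (2 * δ) * (1 + θ)) - f t = f t * (Real.exp (2 * δ) * (1 + θ) - 1) by ring, abs_mul,
      abs_of_nonneg hft, mul_comm]
    gcongr
  have h := main_gg (p := 2 * a - 1) (n := 2 * l) (by linarith) (by omega) hf2 hF2
  rw [sub_add_cancel] at h
  refine h.congr' ?_
  filter_upwards [eventually_ge_atTop 20] with T hT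
  congr 1
  refine intervalIntegral.integral_congr fun t ht => ?_
  rw [uIcc_of_le hT] at ht
  have h0 : 0 < t / (2 * Real.pi) := by have := ht.1; positivity
  have hp := Real.rpow_pos_of_pos h0 (2 * a - 1)
  simp only [hf2def, gg]
  rw [norm_mul, norm_pow, Complex.norm_real, Real.norm_eq_abs, mul_pow, ← pow_mul, mul_comm l 2, pow_mul |_|, sq_abs, Real.rpow_neg h0.le,
    pow_mul (Real.log _) 2 l]
  field_simp

end ZL

open Filter
namespace ZL
open Complex Set MeasureTheory Topology

lemma zd_analytic (l : ℕ) {s : ℂ} (hs : s ≠ 1) : AnalyticAt ℂ (iteratedDeriv l riemannZeta) s := by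
  have : AnalyticAt ℂ riemannZeta s := by
    rw [analyticAt_iff_eventually_differentiableAt]
    filter_upwards [isOpen_ne.mem_nhds hs] with z hz using differentiableAt_riemannZeta hz
  rw [iteratedDeriv_eq_iterate]
  exact this.iterated_deriv l

lemma zd_cont {σ : ℝ} (hσ : σ < 1/2) (l : ℕ) :
    Continuous (fun t : ℝ => iteratedDeriv l riemannZeta ((σ : ℂ) + (t : ℂ) * I)) := by
  rw [continuous_iff_continuousAt]
  intro t
  have hs : (σ : ℂ) + (t : ℂ) * I ≠ 1 := by
    intro h
    have := congrArg Complex.re h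
    simp at this
    linarith
  exact ContinuousAt.comp (f := fun t : ℝ => (σ : ℂ) + (t : ℂ) * I) (zd_analytic l hs).continuousAt (by fun_prop)

lemma zd_eq (σ t : ℝ) (l : ℕ) :
    iteratedDeriv l (fun w => riemannZeta (1 - w)) (((1 - σ : ℝ) : ℂ) - t * I)
      = (-1) ^ l * iteratedDeriv l riemannZeta ((σ : ℂ) + (t : ℂ) * I) := by
  rw [iteratedDeriv_comp_const_sub]
  simp only [smul_eq_mul]
  congr 2
  push_cast; ring

lemma combine {σ : ℝ} (hσ : σ < 1/2) {l : ℕ} (hl : 1 ≤ l) :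
    Tendsto (fun T => (∫ t in Ioc (20:ℝ) T, ‖iteratedDeriv l riemannZeta ((σ : ℂ) + (t : ℂ) * I)‖ ^ 2)
      / (T * gg (2 * (1 - σ) - 1) (2 * l) T)) atTop (𝓝 ((riemannZeta ((2 * (1 - σ) : ℝ) : ℂ)).re / (2 * (1 - σ)))) := by
  set a := 1 - σ with ha
  have ha2 : 1/2 < a := by linarith
  have hpi := Real.pi_pos
  set P : ℝ → ℂ := fun t => ((Real.log (t / (2 * Real.pi)) : ℝ) : ℂ) ^ l * riemannZeta (1 - ((a : ℂ) - t * I)) with hP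
  set Q : ℝ → ℂ := fun t => iteratedDeriv l (fun w => riemannZeta (1 - w)) ((a : ℂ) - t * I) with hQ
  set N : ℝ → ℝ := fun T => T * gg (2 * a - 1) (2 * l) T with hN
  have hNpos : ∀ T, 20 ≤ T → 0 < N T := fun T hT => mul_pos (by linarith) (gg_pos _ _ hT)
  set κ := (riemannZeta ((2 * a : ℝ) : ℂ)).re / (2 * a) with hκ
  have hκ0 : 0 < κ := div_pos (zeta_re_pos ha2) (by linarith)
  have hQe : ∀ t, Q t = (-1) ^ l * iteratedDeriv l riemannZeta ((σ : ℂ) + (t : ℂ) * I) := fun t => zd_eq σ t l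
  have hQn : ∀ t : ℝ, ‖iteratedDeriv l riemannZeta ((σ : ℂ) + (t : ℂ) * I)‖ = ‖Q t‖ := fun t => by
    rw [hQe, norm_mul, norm_pow, norm_neg, norm_one, one_pow, one_mul]
  have hQc : Continuous Q := by
    have : Q = fun t : ℝ => (-1) ^ l * iteratedDeriv l riemannZeta ((σ : ℂ) + (t : ℂ) * I) := funext hQe
    rw [this]
    exact continuous_const.mul (zd_cont hσ l)
  have hPc : ∀ T, ContinuousOn P (Icc 20 T) := by
    intro T t ht
    have ht0 : 0 < t := by linarith [ht.1]
    refine ContinuousAt.continuousWithinAt (ContinuousAt.mul (ContinuousAt.pow ?_ l) ?_)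
    · refine Complex.continuous_ofReal.continuousAt.comp ?_
      have h1 : ContinuousAt (fun t : ℝ => t / (2 * Real.pi)) t := by fun_prop
      exact h1.log (by positivity)
    · have : ContinuousAt riemannZeta (1 - ((a : ℂ) - t * I)) := by
        refine (differentiableAt_riemannZeta ?_).continuousAt
        intro h
        have := congrArg Complex.im h
        simp at this
        linarith
      exact ContinuousAt.comp (f := fun t : ℝ => 1 - ((a : ℂ) - t * I)) this (by fun_prop)
  have hA : Tendsto (fun T => (∫ t in Ioc 20 T, ‖P t‖ ^ 2) / N T) atTop (𝓝 κ) := by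
    refine (main_asymp ha2 hl).congr' ?_
    filter_upwards [eventually_ge_atTop 20] with T hT
    rw [intervalIntegral.integral_of_le hT]
  obtain ⟨C, hC, hE⟩ := err_bound ha2 hl
  have hlogT : Tendsto (fun T : ℝ => Real.log (T / (2 * Real.pi))) atTop atTop :=
    Real.tendsto_log_atTop.comp (tendsto_id.atTop_div_const (by positivity))
  have hEN : Tendsto (fun T => (∫ t in Ioc 20 T, ‖Q t - P t‖ ^ 2) / N T) atTop (𝓝 0) := by
    have hl2 : Tendsto (fun T : ℝ => C * (2 * Real.pi) ^ (2 * a - 1) * (Real.log (T / (2 * Real.pi)))⁻¹ ^ 2) atTop (𝓝 0) := by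
      simpa using (hlogT.inv_tendsto_atTop.pow 2).const_mul (C * (2 * Real.pi) ^ (2 * a - 1))
    refine squeeze_zero' ?_ ?_ hl2
    · filter_upwards [eventually_ge_atTop 20] with T hT
      exact div_nonneg (integral_nonneg fun _ => by positivity) (hNpos T hT).le
    · filter_upwards [eventually_ge_atTop 20] with T hT
      rw [div_le_iff₀ (hNpos T hT)]
      refine (hE T hT).trans (le_of_eq ?_)
      have hL := log_ge_one hT
      have hT0 : 0 < T := by linarith
      have e : T ^ (2 * a) = T ^ (2 * a - 1) * T := by
        rw [← Real.rpow_add_one hT0.ne']; congr 1; ring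
      have h2 := Real.rpow_pos_of_pos (by positivity : 0 < 2 * Real.pi) (2 * a - 1)
      simp only [hN, gg]
      rw [e, Real.div_rpow hT0.le (by positivity)]
      obtain ⟨m, rfl⟩ : ∃ m, l = m + 1 := ⟨l - 1, by omega⟩
      have hL0 : Real.log (T / (2 * Real.pi)) ≠ 0 := by positivity
      simp only [Nat.add_sub_cancel]
      generalize Real.log (T / (2 * Real.pi)) = L at *
      generalize (2 * Real.pi) ^ (2 * a - 1) = X at *
      field_simp
      ring
  have hdiff : Tendsto (fun T => √((∫ t in Ioc 20 T, ‖Q t‖ ^ 2) / N T) - √((∫ t in Ioc 20 T, ‖P t‖ ^ 2) / N T)) atTop (𝓝 0) := by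
    have hs := hEN.sqrt
    rw [Real.sqrt_zero] at hs
    refine squeeze_zero_norm' ?_ hs
    filter_upwards [eventually_ge_atTop 20] with T hT
    have := l2_tri' (memLp_of_contOn (a := 20) (b := T) hQc.continuousOn) (memLp_of_contOn (hPc T))
    have hNT := (hNpos T hT).le
    rw [Real.norm_eq_abs, Real.sqrt_div' _ hNT, Real.sqrt_div' _ hNT, Real.sqrt_div' _ hNT, ← sub_div, abs_div,
      abs_of_nonneg (Real.sqrt_nonneg (N T))]
    gcongr
  have hfin := (hdiff.add hA.sqrt).pow 2
  rw [zero_add, Real.sq_sqrt hκ0.le] at hfin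
  refine hfin.congr' ?_
  filter_upwards [eventually_ge_atTop 20] with T hT
  rw [sub_add_cancel, Real.sq_sqrt (div_nonneg (integral_nonneg fun _ => by positivity) (hNpos T hT).le)]
  simp only [hQn, hN]

lemma first_part {σ : ℝ} (hσ : σ < 1/2) {l : ℕ} (hl : 1 ≤ l) :
    Filter.Tendsto
      (fun T : ℝ =>
        (∫ t in Set.Ioc (0 : ℝ) T,
            ‖iteratedDeriv l riemannZeta ((σ : ℂ) + (t : ℂ) * Complex.I)‖ ^ 2) /
          ((2 * Real.pi) ^ (2 * σ - 1) *
            ((riemannZeta ((2 - 2 * σ : ℝ) : ℂ)).re / (2 - 2 * σ)) *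
            T ^ (2 - 2 * σ) * (Real.log (T / (2 * Real.pi))) ^ (2 * l)))
      Filter.atTop (nhds 1) := by
  have h := combine hσ hl
  rw [show 2 * (1 - σ) = 2 - 2 * σ by ring] at h
  have hpi := Real.pi_pos
  set κ := (riemannZeta ((2 - 2 * σ : ℝ) : ℂ)).re / (2 - 2 * σ) with hκ
  have hκ0 : 0 < κ := by
    have := zeta_re_pos (a := 1 - σ) (by linarith)
    rw [show 2 * (1 - σ) = 2 - 2 * σ by ring] at this
    exact div_pos this (by linarith)
  set f : ℝ → ℝ := fun t => ‖iteratedDeriv l riemannZeta ((σ : ℂ) + (t : ℂ) * Complex.I)‖ ^ 2 with hf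
  have hfc : Continuous f := (zd_cont hσ l).norm.pow 2
  have hN : Tendsto (fun T => T * gg (2 - 2 * σ - 1) (2 * l) T) atTop atTop := by
    refine tendsto_atTop_mono' _ ?_ (tendsto_id.atTop_mul_const (gg_pos (2 - 2 * σ - 1) (2 * l) (le_refl 20)))
    filter_upwards [eventually_ge_atTop 20] with T hT
    have := gg_mono (p := 2 - 2 * σ - 1) (by linarith) (2 * l) le_rfl hT
    simp only [id]
    gcongr
  have h1 : Tendsto (fun T => (∫ t in Ioc (0:ℝ) 20, f t) / (T * gg (2 - 2 * σ - 1) (2 * l) T)) atTop (𝓝 0) :=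
    hN.const_div_atTop _
  have h2 := (h1.add h).div_const κ
  rw [zero_add, div_self hκ0.ne'] at h2
  refine h2.congr' ?_
  filter_upwards [eventually_ge_atTop 20] with T hT
  have hT0 : 0 < T := by linarith
  have e1 : (∫ t in Ioc (0:ℝ) T, f t) = (∫ t in Ioc (0:ℝ) 20, f t) + ∫ t in Ioc (20:ℝ) T, f t := by
    rw [← intervalIntegral.integral_of_le hT0.le, ← intervalIntegral.integral_of_le hT,
      ← intervalIntegral.integral_of_le (by norm_num : (0:ℝ) ≤ 20)]
    exact (intervalIntegral.integral_add_adjacent_intervals (hfc.intervalIntegrable _ _) (hfc.intervalIntegrable _ _)).symm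
  have e2 : (2 * Real.pi) ^ (2 * σ - 1) * κ * T ^ (2 - 2 * σ) * (Real.log (T / (2 * Real.pi))) ^ (2 * l)
      = (T * gg (2 - 2 * σ - 1) (2 * l) T) * κ := by
    unfold gg
    rw [Real.div_rpow hT0.le (by positivity), Real.rpow_sub_one hT0.ne', show 2 * σ - 1 = -(2 - 2 * σ - 1) by ring,
      Real.rpow_neg (by positivity)]
    have := Real.rpow_pos_of_pos (by positivity : 0 < 2 * Real.pi) (2 - 2 * σ - 1)
    field_simp
  rw [e2, e1, ← add_div, div_div]

end ZL

open Filter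
namespace ZL
open Complex Set MeasureTheory Topology

lemma second_aux {σ : ℝ} (hσ : σ < 1/2) {l : ℕ} (hl : 1 ≤ l) {β : ℝ} (hβ0 : 0 < β) (hβ1 : β < 1)
    {ε : ℝ} (hε : 0 < ε) (hε1 : ε < 1) : ∀ᶠ T : ℝ in atTop,
      ∃ t ∈ Set.Icc (T ^ β) T,
        (1 - ε) * (2 * Real.pi) ^ (σ - 1 / 2) *
            Real.sqrt ((riemannZeta ((2 - 2 * σ : ℝ) : ℂ)).re / (2 - 2 * σ)) *
            T ^ (1 / 2 - σ) * (Real.log T) ^ l ≤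
          ‖iteratedDeriv l riemannZeta ((σ : ℂ) + (t : ℂ) * Complex.I)‖ := by
  have h := first_part hσ hl
  have hpi := Real.pi_pos
  set κ := (riemannZeta ((2 - 2 * σ : ℝ) : ℂ)).re / (2 - 2 * σ) with hκ
  have hκ0 : 0 < κ := by
    have := zeta_re_pos (a := 1 - σ) (by linarith)
    rw [show 2 * (1 - σ) = 2 - 2 * σ by ring] at this
    exact div_pos this (by linarith)
  set f : ℝ → ℝ := fun t => ‖iteratedDeriv l riemannZeta ((σ : ℂ) + (t : ℂ) * Complex.I)‖ ^ 2 with hf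
  have hfc : Continuous f := (zd_cont hσ l).norm.pow 2
  set J : ℝ → ℝ := fun T => ∫ t in Set.Ioc (0 : ℝ) T, f t with hJ
  set D : ℝ → ℝ := fun T => (2 * Real.pi) ^ (2 * σ - 1) * κ * T ^ (2 - 2 * σ) * (Real.log (T / (2 * Real.pi))) ^ (2 * l) with hD
  have hJD : Tendsto (fun T => J T / D T) atTop (𝓝 1) := h
  have hc := Real.rpow_pos_of_pos (by positivity : 0 < 2 * Real.pi) (2 * σ - 1)
  have hDpos : ∀ T, 20 ≤ T → 0 < D T := fun T hT => by
    have := log_ge_one hT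
    have hT0 : 0 < T := by linarith
    have := Real.rpow_pos_of_pos hT0 (2 - 2 * σ)
    simp only [hD]
    positivity
  have hTβ : Tendsto (fun T : ℝ => T ^ β) atTop atTop := tendsto_rpow_atTop hβ0
  have hlogT : Tendsto (fun T : ℝ => Real.log (T / (2 * Real.pi))) atTop atTop :=
    Real.tendsto_log_atTop.comp (tendsto_id.atTop_div_const (by positivity))
  have hle : ∀ T : ℝ, 20 ≤ T → T ^ β ≤ T := fun T hT => by
    conv_rhs => rw [← Real.rpow_one T]
    exact Real.rpow_le_rpow_of_exponent_le (by linarith) hβ1.le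
  have hDD : Tendsto (fun T => D (T ^ β) / D T) atTop (𝓝 0) := by
    have h0 : Tendsto (fun T : ℝ => T ^ (-((1 - β) * (2 - 2 * σ)))) atTop (𝓝 0) :=
      tendsto_rpow_neg_atTop (mul_pos (by linarith) (by linarith))
    refine squeeze_zero' ?_ ?_ h0
    · filter_upwards [eventually_ge_atTop 20, hTβ.eventually_ge_atTop 20] with T hT hT2
      exact div_nonneg (hDpos _ hT2).le (hDpos _ hT).le
    · filter_upwards [eventually_ge_atTop 20, hTβ.eventually_ge_atTop 20] with T hT hT2
      have hT0 : 0 < T := by linarith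
      rw [div_le_iff₀ (hDpos T hT)]
      have hL := log_ge_one hT2
      have e : T ^ (-((1 - β) * (2 - 2 * σ))) * T ^ (2 - 2 * σ) = (T ^ β) ^ (2 - 2 * σ) := by
        rw [← Real.rpow_mul hT0.le, ← Real.rpow_add hT0]; congr 1; ring
      have hm : Real.log (T ^ β / (2 * Real.pi)) ≤ Real.log (T / (2 * Real.pi)) := by
        have := hle T hT
        have : 0 < T ^ β := by linarith
        gcongr
      have := Real.rpow_pos_of_pos (by linarith : 0 < T ^ β) (2 - 2 * σ)
      calc D (T ^ β) ≤ (2 * Real.pi) ^ (2 * σ - 1) * κ * (T ^ β) ^ (2 - 2 * σ) * (Real.log (T / (2 * Real.pi))) ^ (2 * l) := by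
            simp only [hD]
            gcongr
        _ = _ := by rw [← e]; simp only [hD]; ring
  have hsmall : Tendsto (fun T => J (T ^ β) / D T) atTop (𝓝 0) := by
    have := (hJD.comp hTβ).mul hDD
    rw [mul_zero] at this
    refine this.congr' ?_
    filter_upwards [eventually_ge_atTop 20, hTβ.eventually_ge_atTop 20] with T hT hT2
    have h1 := hDpos _ hT
    have h2 := hDpos _ hT2
    simp only [Function.comp]
    field_simp
  have hρ : Tendsto (fun T : ℝ => Real.log T / Real.log (T / (2 * Real.pi))) atTop (𝓝 1) := by
    have := (hlogT.const_div_atTop (Real.log (2 * Real.pi))).const_add 1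
    rw [add_zero] at this
    refine this.congr' ?_
    filter_upwards [eventually_ge_atTop 20] with T hT
    have hL := log_ge_one hT
    have hT0 : 0 < T := by linarith
    have e : Real.log T = Real.log (T / (2 * Real.pi)) + Real.log (2 * Real.pi) := by
      rw [Real.log_div hT0.ne' (by positivity)]; ring
    rw [e, add_div, div_self (by positivity)]
  have hR : Tendsto (fun T => J (T ^ β) / D T + (1 - ε) ^ 2 * (Real.log T / Real.log (T / (2 * Real.pi))) ^ (2 * l)) atTop
      (𝓝 ((1 - ε) ^ 2)) := by
    simpa using hsmall.add ((hρ.pow (2 * l)).const_mul ((1 - ε) ^ 2))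
  have hlt : (1 - ε) ^ 2 < 1 := by nlinarith
  filter_upwards [hR.eventually_lt hJD hlt, eventually_ge_atTop 20, hTβ.eventually_ge_atTop 20] with T hT hT20 hT2
  by_contra! hcon
  have hT0 : 0 < T := by linarith
  have hL := log_ge_one hT20
  set B := (1 - ε) * (2 * Real.pi) ^ (σ - 1 / 2) * √κ * T ^ (1 / 2 - σ) * Real.log T ^ l with hB
  have hTβT := hle T hT20
  have e1 : J T = J (T ^ β) + ∫ t in Ioc (T ^ β) T, f t := by
    simp only [hJ]
    rw [← intervalIntegral.integral_of_le hT0.le, ← intervalIntegral.integral_of_le hTβT,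
      ← intervalIntegral.integral_of_le (by linarith : 0 ≤ T ^ β)]
    exact (intervalIntegral.integral_add_adjacent_intervals (hfc.intervalIntegrable _ _) (hfc.intervalIntegrable _ _)).symm
  have e2 : ∫ t in Ioc (T ^ β) T, f t ≤ T * B ^ 2 := by
    rw [← intervalIntegral.integral_of_le hTβT]
    have : ∫ t in (T ^ β)..T, f t ≤ ∫ t in (T ^ β)..T, B ^ 2 := by
      refine intervalIntegral.integral_mono_on hTβT (hfc.intervalIntegrable _ _) (by simp) fun t ht => ?_
      have := (hcon t ht).le
      simp only [hf]
      gcongr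
    simp only [intervalIntegral.integral_const, smul_eq_mul] at this
    refine this.trans ?_
    gcongr
    linarith
  have e3 : T * B ^ 2 = (1 - ε) ^ 2 * (Real.log T / Real.log (T / (2 * Real.pi))) ^ (2 * l) * D T := by
    have a1 : ((2 * Real.pi) ^ (σ - 1 / 2)) ^ 2 = (2 * Real.pi) ^ (2 * σ - 1) := by
      rw [← Real.rpow_natCast, ← Real.rpow_mul (by positivity)]; congr 1; push_cast; ring
    have a2 : T * (T ^ (1 / 2 - σ)) ^ 2 = T ^ (2 - 2 * σ) := by
      rw [← Real.rpow_natCast, ← Real.rpow_mul (by positivity), mul_comm, ← Real.rpow_add_one hT0.ne']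
      congr 1; push_cast; ring
    simp only [hB, hD]
    rw [← a1, ← a2, mul_pow, mul_pow, mul_pow, mul_pow, Real.sq_sqrt hκ0.le, ← pow_mul, mul_comm l 2, div_pow]
    field_simp
  have hDT := hDpos T hT20
  have : J T / D T ≤ J (T ^ β) / D T + (1 - ε) ^ 2 * (Real.log T / Real.log (T / (2 * Real.pi))) ^ (2 * l) := by
    rw [div_le_iff₀ hDT, add_mul, div_mul_cancel₀ _ hDT.ne', ← e3, e1]
    linarith
  linarith

end ZL

open Filter

theorem second_moment_and_max_deriv_zeta_left (ℓ : ℕ) (hℓ : 1 ≤ ℓ) (σ : ℝ)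
    (hσ : σ < 1 / 2) :
    Filter.Tendsto
      (fun T : ℝ =>
        (∫ t in Set.Ioc (0 : ℝ) T,
            ‖iteratedDeriv ℓ riemannZeta ((σ : ℂ) + (t : ℂ) * Complex.I)‖ ^ 2) /
          ((2 * Real.pi) ^ (2 * σ - 1) *
            ((riemannZeta ((2 - 2 * σ : ℝ) : ℂ)).re / (2 - 2 * σ)) *
            T ^ (2 - 2 * σ) * (Real.log (T / (2 * Real.pi))) ^ (2 * ℓ)))
      Filter.atTop (nhds 1) ∧
    ∀ β : ℝ, β ∈ Set.Ico (0 : ℝ) 1 → ∀ ε : ℝ, 0 < ε → ∃ T₀ : ℝ, ∀ T : ℝ, T₀ ≤ T →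
      ∃ t ∈ Set.Icc (T ^ β) T,
        (1 - ε) * (2 * Real.pi) ^ (σ - 1 / 2) *
            Real.sqrt ((riemannZeta ((2 - 2 * σ : ℝ) : ℂ)).re / (2 - 2 * σ)) *
            T ^ (1 / 2 - σ) * (Real.log T) ^ ℓ ≤
          ‖iteratedDeriv ℓ riemannZeta ((σ : ℂ) + (t : ℂ) * Complex.I)‖ := by
  refine ⟨ZL.first_part hσ hℓ, fun β hβ ε hε => ?_⟩
  have hβ' : max β (1 / 2) < 1 := max_lt hβ.2 (by norm_num)
  have h := ZL.second_aux hσ hℓ (β := max β (1 / 2)) (lt_max_of_lt_right (by norm_num)) hβ'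
    (ε := min ε (1 / 2)) (lt_min hε (by norm_num)) ((min_le_right _ _).trans_lt (by norm_num))
  obtain ⟨T₀, hT₀⟩ := eventually_atTop.1 (h.and (eventually_ge_atTop 1))
  refine ⟨T₀, fun T hT => ?_⟩
  obtain ⟨⟨t, ht, htB⟩, hT1⟩ := hT₀ T hT
  refine ⟨t, ⟨le_trans (Real.rpow_le_rpow_of_exponent_le hT1 (le_max_left _ _)) ht.1, ht.2⟩, le_trans ?_ htB⟩
  have hlog := Real.log_nonneg hT1
  have hT0 : 0 < T := by linarith
  gcongr
  exact min_le_left _ _
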